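/- arXiv:1603.04246 — 2 statements merged into one kernel-verified Lean document; each statement's English description precedes it below -/
import Mathlib

section
/- For every r ≥ 0 with r ≠ 0 and r ≠ √2, a(r) = 4i · sin²(πr²/2) · ( 36/(π³(r²−2)) − 8640/(π³r⁴) + 18144/(π³r²) + ∫_{0}^{∞} ( t² φ0(i/t) − (36/π²) e^{2πt} + (8640/π) t − 18144/π² ) e^{−πr²t} dt ), and the integral converges absolutely for all r ≥ 0. -/
open MeasureTheory

/-- Weight 2 Eisenstein series (quasimodular), via its `q`-expansion. -/
noncomputable def E2 (z : ℂ) : ℂ :=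
  1 - 24 * ∑' n : ℕ+, ((ArithmeticFunction.sigma 1 n : ℕ) : ℂ) *
    Complex.exp (2 * (Real.pi : ℂ) * Complex.I * n * z)

/-- Weight 4 Eisenstein series, via its `q`-expansion. -/
noncomputable def E4 (z : ℂ) : ℂ :=
  1 + 240 * ∑' n : ℕ+, ((ArithmeticFunction.sigma 3 n : ℕ) : ℂ) *
    Complex.exp (2 * (Real.pi : ℂ) * Complex.I * n * z)

/-- Weight 6 Eisenstein series, via its `q`-expansion. -/
noncomputable def E6 (z : ℂ) : ℂ :=
  1 - 504 * ∑' n : ℕ+, ((ArithmeticFunction.sigma 5 n : ℕ) : ℂ) *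
    Complex.exp (2 * (Real.pi : ℂ) * Complex.I * n * z)

/-- The elliptic `j`-invariant. -/
noncomputable def jInv (z : ℂ) : ℂ := 1728 * E4 z ^ 3 / (E4 z ^ 3 - E6 z ^ 2)

/-- The weakly holomorphic modular form `varphi_{-2}`. -/
noncomputable def varphim2 (z : ℂ) : ℂ := -1728 * E4 z * E6 z / (E4 z ^ 3 - E6 z ^ 2)

/-- The weakly holomorphic modular form `varphi_{-4}`. -/
noncomputable def varphim4 (z : ℂ) : ℂ := 1728 * E4 z ^ 2 / (E4 z ^ 3 - E6 z ^ 2)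

/-- `φ_{-4} = varphi_{-4}`. -/
noncomputable def phim4 (z : ℂ) : ℂ := varphim4 z

/-- `φ_{-2} = varphi_{-4}·E2 + varphi_{-2}`. -/
noncomputable def phim2 (z : ℂ) : ℂ := varphim4 z * E2 z + varphim2 z

/-- `φ_0 = varphi_{-4}·E2² + 2·varphi_{-2}·E2 + j − 1728`. -/
noncomputable def phi0 (z : ℂ) : ℂ :=
  varphim4 z * E2 z ^ 2 + 2 * varphim2 z * E2 z + jInv z - 1728
/-- Contour integral of `F` along the straight-line segment from `z₁` to `z₂`. -/
noncomputable def segInt (z₁ z₂ : ℂ) (F : ℂ → ℂ) : ℂ :=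
  (z₂ - z₁) * ∫ t in (0:ℝ)..1, F (z₁ + (t : ℂ) * (z₂ - z₁))

/-- Contour integral of `F` along the vertical ray from `c·i` to `i∞`. -/
noncomputable def rayIntFrom (c : ℝ) (F : ℂ → ℂ) : ℂ :=
  Complex.I * ∫ t in Set.Ioi c, F (Complex.I * (t : ℂ))
/-- The radial profile of the `+1`-eigenfunction `a`: the value of `a` on vectors of norm `r`. -/
noncomputable def aRad (r : ℝ) : ℂ :=
  segInt (-1) Complex.I
      (fun z => phi0 (-1/(z+1)) * (z+1)^2 * Complex.exp ((Real.pi:ℂ) * Complex.I * (r:ℂ)^2 * z))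
    + segInt 1 Complex.I
      (fun z => phi0 (-1/(z-1)) * (z-1)^2 * Complex.exp ((Real.pi:ℂ) * Complex.I * (r:ℂ)^2 * z))
    - 2 * segInt 0 Complex.I
      (fun z => phi0 (-1/z) * z^2 * Complex.exp ((Real.pi:ℂ) * Complex.I * (r:ℂ)^2 * z))
    + 2 * rayIntFrom 1 (fun z => phi0 z * Complex.exp ((Real.pi:ℂ) * Complex.I * (r:ℂ)^2 * z))

/-- The radial function `a : ℝ⁸ → ℂ`. -/
noncomputable def aFn (x : EuclideanSpace ℝ (Fin 8)) : ℂ := aRad ‖x‖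

/-!
Translating the segments from `∓1` to start at `0` turns all three finite integrals into integrals
of `ψ(z) e^{πir²z}` from `0` to `i ± 1` and `i`, where `ψ(z) = φ₀(-1/z) z²`; the two translations
cost the factors `e^{∓πir²}`. By modularity `ψ(z) = z² φ₀ - (12i/π) z φ₋₂ - (36/π²) φ₋₄`. Subtract
from `ψ` its non-decaying part at `i∞`, a combination of `e^{-2πiz}`, `z` and `1`. The remainder `R`
decays, so by Cauchy's theorem each segment integral of `R(z) e^{πir²z}`, prolonged by the vertical
ray from its endpoint, equals the integral along the imaginary axis. The weights `e^{-πir²}`,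
`e^{πir²}`, `-2` make the three rays combine into the last integral of `a`, because the second
difference of `R` is `2φ₀`, and they add up to `-4 sin²(πr²/2)`. The non-decaying part is integrated
explicitly: its antiderivative contributes nothing at the upper endpoints, being `e^{πir²z}` times
a function with vanishing second difference, and gives the rational terms in `r` at `0`.
-/

open Filter Topology Asymptotics
open Complex (I I_sq)
open scoped Complex MatrixGroups Real UpperHalfPlane ArithmeticFunction.sigma

local notation "𝕢" => Function.Periodic.qParam 1
/-- The neighbourhoods of `i∞` in `ℂ`, where `UpperHalfPlane.atImInfty` is the filter on `ℍ`. -/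
local notation "I∞" => comap Complex.im atTop

/-! ### Contour shifts in a cone -/

/-- The filter of neighbourhoods of `i∞` in the vertical strip `|Re z| ≤ w`, on which the decay
of an integrand justifies moving vertical contours. -/
def stripAtImInfty (w : ℝ) : Filter ℂ := I∞ ⊓ 𝓟 {z | |z.re| ≤ w}

lemma eventually_stripAtImInfty (w y : ℝ) : ∀ᶠ z in stripAtImInfty w, |z.re| ≤ w ∧ y ≤ z.im :=
  .and (mem_inf_of_right (mem_principal_self _))
    (mem_inf_of_left ((eventually_ge_atTop y).comap Complex.im))

lemma tendsto_I_mul_add_stripAtImInfty {x w : ℝ} (hx : |x| ≤ w) :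
    Tendsto (fun t : ℝ => I * t + x) atTop (stripAtImInfty w) := by
  refine tendsto_inf.2 ⟨tendsto_comap_iff.2 ?_, tendsto_principal.2 (.of_forall fun t => ?_)⟩
  · exact tendsto_id.congr fun t => by simp
  · simpa using hx

/-- The closed cone of aperture `π / 2` around the positive imaginary axis, a convex set containing
the segments from `0` to `i` and `i ± 1` and the vertical rays above their endpoints. -/
def imCone : Set ℂ := {z | |z.re| ≤ z.im}

lemma convex_imCone : Convex ℝ imCone := by
  intro x hx y hy a b ha hb _
  calc |(a • x + b • y).re| ≤ a * |x.re| + b * |y.re| := by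
        simpa [abs_mul, abs_of_nonneg ha, abs_of_nonneg hb] using abs_add_le (a * x.re) (b * y.re)
    _ ≤ a * x.im + b * y.im := by gcongr <;> assumption
    _ = (a • x + b • y).im := by simp

lemma zero_mem_imCone : 0 ∈ imCone := by simp [imCone]

lemma I_mul_add_mem_imCone {x t : ℝ} (h : |x| ≤ t) : I * t + x ∈ imCone := by
  simpa [imCone] using h

lemma mapsTo_I_mul_add_imCone {x y : ℝ} (hxy : |x| ≤ y) :
    Set.MapsTo (fun t : ℝ => I * t + x) (Set.Ici y) imCone :=
  fun _ ht => I_mul_add_mem_imCone (hxy.trans ht)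

lemma norm_le_two_mul_im {z : ℂ} (hz : z ∈ imCone) : ‖z‖ ≤ 2 * z.im := by
  have hre : |z.re| ≤ z.im := hz
  calc ‖z‖ ≤ |z.re| + |z.im| := z.norm_le_abs_re_add_abs_im
    _ ≤ z.im + z.im := by
      gcongr
      exact (abs_of_nonneg ((abs_nonneg _).trans hre)).le
    _ = 2 * z.im := (two_mul _).symm

lemma im_pos_of_mem_imCone {z : ℂ} (hz : z ∈ imCone) (h0 : z ≠ 0) : 0 < z.im := by
  linarith [norm_pos_iff.2 h0, norm_le_two_mul_im hz]

lemma tendsto_neg_one_div_imCone :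
    Tendsto (fun z : ℂ => -1 / z) (𝓝[imCone \ {0}] 0) I∞ := by
  have hnorm : Tendsto (fun z : ℂ => ‖z⁻¹‖ / 2) (𝓝[imCone \ {0}] 0) atTop :=
    (tendsto_norm_inv_nhdsNE_zero_atTop.mono_left
      (nhdsWithin_mono _ fun _ hz => hz.2)).atTop_div_const two_pos
  refine tendsto_comap_iff.2 (tendsto_atTop_mono' _ ?_ hnorm)
  filter_upwards [self_mem_nhdsWithin] with z ⟨hz, hz0⟩
  have hpos : 0 < ‖z‖ := norm_pos_iff.2 hz0
  have him : (-1 / z).im = z.im / ‖z‖ ^ 2 := by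
    rw [neg_div, one_div, Complex.neg_im, Complex.inv_im, Complex.normSq_eq_norm_sq]
    ring
  rw [Function.comp_apply, him, norm_inv, div_le_div_iff₀ two_pos (by positivity)]
  calc ‖z‖⁻¹ * ‖z‖ ^ 2 = ‖z‖ := by field_simp
    _ ≤ z.im * 2 := by linarith [norm_le_two_mul_im hz]

lemma segInt_eq_sub_of_hasDerivWithinAt {s : Set ℂ} (hs : Convex ℝ s) {f F : ℂ → ℂ}
    (hF : ∀ z ∈ s, HasDerivWithinAt F (f z) s z) (hf : ContinuousOn f s) {z₁ z₂ : ℂ}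
    (h₁ : z₁ ∈ s) (h₂ : z₂ ∈ s) : segInt z₁ z₂ f = F z₂ - F z₁ := by
  have hmaps : Set.MapsTo (fun t : ℝ => z₁ + (t : ℂ) * (z₂ - z₁)) (Set.Icc 0 1) s := fun t ht => by
    simpa using hs.add_smul_sub_mem h₁ h₂ ht
  have hderiv (t : ℝ) (ht : t ∈ Set.Icc (0 : ℝ) 1) :
      HasDerivWithinAt (fun t : ℝ => F (z₁ + (t : ℂ) * (z₂ - z₁)))
        ((z₂ - z₁) * f (z₁ + (t : ℂ) * (z₂ - z₁))) (Set.Icc 0 1) t :=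
    (hF _ (hmaps ht)).scomp t (by
      simpa using ((Complex.ofRealCLM.hasDerivAt.mul_const _).const_add z₁).hasDerivWithinAt) hmaps
  have hcont : ContinuousOn (fun t : ℝ => (z₂ - z₁) * f (z₁ + (t : ℂ) * (z₂ - z₁)))
      (Set.Icc 0 1) := continuousOn_const.mul (hf.comp (by fun_prop) hmaps)
  rw [segInt, ← intervalIntegral.integral_const_mul,
    intervalIntegral.integral_eq_sub_of_hasDerivAt_of_le zero_le_one
      (fun t ht => (hderiv t ht).continuousWithinAt)
      (fun t ht => (hderiv t (Set.Ioo_subset_Icc_self ht)).hasDerivAt (Icc_mem_nhds ht.1 ht.2))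
      (hcont.intervalIntegrable_of_Icc zero_le_one)]
  simp

lemma segInt_comp_add_right (z₁ z₂ w : ℂ) (f : ℂ → ℂ) :
    segInt z₁ z₂ (fun z => f (z + w)) = segInt (z₁ + w) (z₂ + w) f := by
  simp only [segInt, add_sub_add_right_eq_sub, add_right_comm]

lemma segInt_const_mul (z₁ z₂ c : ℂ) (f : ℂ → ℂ) :
    segInt z₁ z₂ (fun z => c * f z) = c * segInt z₁ z₂ f := by
  rw [segInt, segInt, intervalIntegral.integral_const_mul, mul_left_comm]

lemma segInt_add {s : Set ℂ} (hs : Convex ℝ s) {f g : ℂ → ℂ} (hf : ContinuousOn f s)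
    (hg : ContinuousOn g s) {z₁ z₂ : ℂ} (h₁ : z₁ ∈ s) (h₂ : z₂ ∈ s) :
    segInt z₁ z₂ (fun z => f z + g z) = segInt z₁ z₂ f + segInt z₁ z₂ g := by
  have hint {f : ℂ → ℂ} (hf : ContinuousOn f s) :
      IntervalIntegrable (fun t : ℝ => f (z₁ + (t : ℂ) * (z₂ - z₁))) volume 0 1 :=
    (hf.comp (by fun_prop) fun t ht => by
      simpa using hs.add_smul_sub_mem h₁ h₂ ht).intervalIntegrable_of_Icc zero_le_one
  rw [segInt, segInt, segInt, intervalIntegral.integral_add (hint hf) (hint hg), mul_add]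

lemma rayIntFrom_const_mul (c : ℝ) (k : ℂ) (f : ℂ → ℂ) :
    rayIntFrom c (fun z => k * f z) = k * rayIntFrom c f := by
  rw [rayIntFrom, rayIntFrom, integral_const_mul, mul_left_comm]

section ContourShift

variable {f F : ℂ → ℂ} {b x y : ℝ}

lemma integrableOn_I_mul_add (hf : ContinuousOn f imCone) (hb : 0 < b)
    (hO : f =O[stripAtImInfty |x|] fun z => Real.exp (-b * z.im)) (hxy : |x| ≤ y) :
    IntegrableOn (fun t : ℝ => f (I * t + x)) (Set.Ioi y) := by
  have hcont : ContinuousOn (fun t : ℝ => f (I * t + x)) (Set.Ici y) :=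
    hf.comp (by fun_prop) (mapsTo_I_mul_add_imCone hxy)
  have hdecay : (fun t : ℝ => f (I * t + x)) =O[atTop] fun t => Real.exp (-b * t) := by
    simpa [Function.comp_def] using
      hO.comp_tendsto (tendsto_I_mul_add_stripAtImInfty le_rfl)
  exact ((hcont.locallyIntegrableOn measurableSet_Ici).integrableOn_of_isBigO_atTop hdecay
    ⟨Set.Ioi 0, Ioi_mem_atTop 0, exp_neg_integrableOn_Ioi 0 hb⟩).mono_set Set.Ioi_subset_Ici_self

lemma hasDerivWithinAt_comp_I_mul_add (hF : ∀ z ∈ imCone, HasDerivWithinAt F (f z) imCone z)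
    (hxy : |x| ≤ y) {t : ℝ} (ht : t ∈ Set.Ici y) :
    HasDerivWithinAt (fun t : ℝ => F (I * t + x)) (I * f (I * t + x)) (Set.Ici y) t :=
  (hF _ (mapsTo_I_mul_add_imCone hxy ht)).scomp t
    (by simpa using
      ((Complex.ofRealCLM.hasDerivAt.const_mul I).add_const (x : ℂ)).hasDerivWithinAt)
    (mapsTo_I_mul_add_imCone hxy)

lemma tendsto_primitive_sub_primitive_of_isBigO_exp (hf : ContinuousOn f imCone)
    (hF : ∀ z ∈ imCone, HasDerivWithinAt F (f z) imCone z) (hb : 0 < b)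
    (hO : f =O[stripAtImInfty |x|] fun z => Real.exp (-b * z.im)) :
    Tendsto (fun t : ℝ => F (I * t + x) - F (I * t)) atTop (𝓝 0) := by
  obtain ⟨C, hC⟩ := hO.bound
  obtain ⟨Y, -, hY⟩ := ((atTop_basis.comap Complex.im).inf_principal _).mem_iff.1 hC
  have hlim : Tendsto (fun t : ℝ => |x| * (C * Real.exp (-b * t))) atTop (𝓝 0) := by
    have hexp := Real.tendsto_exp_atBot.comp (tendsto_id.const_mul_atTop_of_neg (neg_neg_of_pos hb))
    simpa using (hexp.const_mul C).const_mul |x|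
  refine squeeze_zero_norm' ?_ hlim
  filter_upwards [eventually_ge_atTop Y, eventually_ge_atTop |x|] with t hYt hxt
  have hbound (s : ℝ) (hs : s ∈ Set.uIoc 0 1) :
      ‖f (I * t + (s : ℂ) * (I * t + x - I * t))‖ ≤ C * Real.exp (-b * t) := by
    obtain ⟨hs0, hs1⟩ := Set.uIoc_of_le (zero_le_one (α := ℝ)) ▸ hs
    have hre : |s * x| ≤ |x| := by
      rw [abs_mul, abs_of_pos hs0]
      exact mul_le_of_le_one_left (abs_nonneg x) hs1
    simpa using hY (a := I * t + (s : ℂ) * (I * t + x - I * t))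
      ⟨by simpa using hYt, by simpa using hre⟩
  rw [← segInt_eq_sub_of_hasDerivWithinAt convex_imCone hF hf
    (by simpa using I_mul_add_mem_imCone (x := 0) (by simpa using (abs_nonneg x).trans hxt))
    (I_mul_add_mem_imCone hxt), segInt, norm_mul]
  calc _ ≤ |x| * (C * Real.exp (-b * t) * |1 - 0|) := by
        gcongr
        · simp
        · exact intervalIntegral.norm_integral_le_of_norm_le_const hbound
    _ = |x| * (C * Real.exp (-b * t)) := by simp

lemma rayIntFrom_comp_add_eq_sub (hF : ∀ z ∈ imCone, HasDerivWithinAt F (f z) imCone z)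
    (hxy : |x| ≤ y) (hint : IntegrableOn (fun t : ℝ => f (I * t + x)) (Set.Ioi y)) {L : ℂ}
    (hL : Tendsto (fun t : ℝ => F (I * t + x)) atTop (𝓝 L)) :
    rayIntFrom y (fun z => f (z + x)) = L - F (I * y + x) := by
  have hderiv {t : ℝ} (ht : t ∈ Set.Ici y) := hasDerivWithinAt_comp_I_mul_add hF hxy ht
  rw [rayIntFrom, ← integral_const_mul,
    integral_Ioi_of_hasDerivAt_of_tendsto (hderiv Set.self_mem_Ici).continuousWithinAt
      (fun t ht => (hderiv (Set.Ioi_subset_Ici_self ht)).hasDerivAt (Ici_mem_nhds ht))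
      (hint.const_mul I) hL]

lemma segInt_add_rayIntFrom_eq_rayIntFrom (hf : DifferentiableOn ℂ f imCone) (hb : 0 < b)
    (hO : f =O[stripAtImInfty |x|] fun z => Real.exp (-b * z.im)) (hxy : |x| ≤ y) :
    segInt 0 (I * y + x) f + rayIntFrom y (fun z => f (z + x)) = rayIntFrom 0 f := by
  obtain ⟨F, hF⟩ := convex_imCone.exists_forall_hasDerivWithinAt hf
  have hO₀ : f =O[stripAtImInfty |(0 : ℝ)|] fun z => Real.exp (-b * z.im) :=
    hO.mono (inf_le_inf_left _ (principal_mono.2 fun z (hz : |z.re| ≤ _) => hz.trans (by simp)))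
  have h₀ : |(0 : ℝ)| ≤ 0 := abs_zero.le
  have hint₀ := integrableOn_I_mul_add hf.continuousOn hb hO₀ h₀
  obtain ⟨L, hL₀⟩ : ∃ L, Tendsto (fun t : ℝ => F (I * t + (0 : ℝ))) atTop (𝓝 L) :=
    ⟨_, tendsto_limUnder_of_hasDerivAt_of_integrableOn_Ioi (fun t ht =>
      (hasDerivWithinAt_comp_I_mul_add hF h₀ (Set.Ioi_subset_Ici_self ht)).hasDerivAt
        (Ici_mem_nhds ht)) (hint₀.const_mul I)⟩
  have hL : Tendsto (fun t : ℝ => F (I * t + x)) atTop (𝓝 L) := by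
    simpa using (tendsto_primitive_sub_primitive_of_isBigO_exp hf.continuousOn hF hb hO).add hL₀
  have hray₀ := rayIntFrom_comp_add_eq_sub hF h₀ hint₀ hL₀
  simp only [Complex.ofReal_zero, add_zero, mul_zero] at hray₀
  rw [segInt_eq_sub_of_hasDerivWithinAt convex_imCone hF hf.continuousOn zero_mem_imCone
      (I_mul_add_mem_imCone hxy), hray₀, rayIntFrom_comp_add_eq_sub hF hxy
      (integrableOn_I_mul_add hf.continuousOn hb hO hxy) hL]
  ring

end ContourShift

/-! ### Eisenstein series and the forms `φ₀`, `φ₋₂`, `φ₋₄` -/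

/-- The generating power series of the divisor function `σ k`. -/
noncomputable def sigmaSeries (k : ℕ) (q : ℂ) : ℂ := ∑' n : ℕ, (σ k n : ℂ) * q ^ n

lemma tsum_sigma_mul_cexp (k : ℕ) (z : ℂ) :
    ∑' n : ℕ+, ((σ k n : ℕ) : ℂ) * cexp (2 * π * I * n * z) = sigmaSeries k (𝕢 z) := by
  have hterm (n : ℕ+) : ((σ k n : ℕ) : ℂ) * cexp (2 * π * I * n * z) =
      (fun n : ℕ => (σ k n : ℂ) * 𝕢 z ^ n) n := by
    simp only [Function.Periodic.qParam, ← Complex.exp_nat_mul]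
    congr 2
    push_cast
    ring
  simp only [hterm, sigmaSeries]
  refine PNat.coe_injective.tsum_eq (f := fun n : ℕ => (σ k n : ℂ) * 𝕢 z ^ n)
    fun n hn => ⟨⟨n, Nat.pos_of_ne_zero ?_⟩, rfl⟩
  rintro rfl
  simp at hn

lemma E2_eq_sigmaSeries (z : ℂ) : E2 z = 1 - 24 * sigmaSeries 1 (𝕢 z) := by
  rw [E2, tsum_sigma_mul_cexp]

lemma E4_eq_sigmaSeries (z : ℂ) : E4 z = 1 + 240 * sigmaSeries 3 (𝕢 z) := by
  rw [E4, tsum_sigma_mul_cexp]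

lemma E6_eq_sigmaSeries (z : ℂ) : E6 z = 1 - 504 * sigmaSeries 5 (𝕢 z) := by
  rw [E6, tsum_sigma_mul_cexp]

lemma hasFPowerSeriesOnBall_sigmaSeries (k : ℕ) :
    HasFPowerSeriesOnBall (sigmaSeries k)
      (FormalMultilinearSeries.ofScalars ℂ fun n => (σ k n : ℂ)) 0 1 := by
  set p := FormalMultilinearSeries.ofScalars ℂ fun n => (σ k n : ℂ)
  have hsum : p.sum = sigmaSeries k :=
    funext fun q => FormalMultilinearSeries.ofScalars_sum_eq (fun n => (σ k n : ℂ)) q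
  have hradius : 1 ≤ p.radius := by
    refine ENNReal.le_of_forall_nnreal_lt fun r hr => p.le_radius_of_summable ?_
    have hr' : ‖(r : ℝ)‖ < 1 := by simpa using hr
    refine (summable_pow_mul_geometric_of_norm_lt_one (k + 1) hr').of_nonneg_of_le
      (fun n => by positivity) fun n => ?_
    rw [FormalMultilinearSeries.ofScalars_norm, Complex.norm_natCast]
    gcongr
    exact_mod_cast ArithmeticFunction.sigma_le_pow_succ k n
  exact hsum ▸ (p.hasFPowerSeriesOnBall (one_pos.trans_le hradius)).mono one_pos hradius

lemma differentiableAt_sigmaSeries_qParam (k : ℕ) {z : ℂ} (hz : 0 < z.im) :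
    DifferentiableAt ℂ (fun z => sigmaSeries k (𝕢 z)) z := by
  have hq : 𝕢 z ∈ Metric.eball (0 : ℂ) 1 := by
    simpa [← ofReal_norm] using Function.Periodic.norm_qParam_lt_one one_pos hz
  exact ((hasFPowerSeriesOnBall_sigmaSeries k).differentiableOn.differentiableAt
    (Metric.isOpen_eball.mem_nhds hq)).comp z
      Function.Periodic.differentiable_qParam.differentiableAt

lemma qParam_tendsto_zero : Tendsto 𝕢 I∞ (𝓝 0) :=
  (Function.Periodic.qParam_tendsto one_pos).mono_right nhdsWithin_le_nhds

lemma sigmaSeries_qParam_sub_isBigO (k n : ℕ) :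
    (fun z => sigmaSeries k (𝕢 z) - ∑ m ∈ Finset.range n, (σ k m : ℂ) * 𝕢 z ^ m)
      =O[I∞] fun z => 𝕢 z ^ n := by
  refine (((hasFPowerSeriesOnBall_sigmaSeries k).hasFPowerSeriesAt.isBigO_sub_partialSum_pow
    n).comp_tendsto qParam_tendsto_zero |>.congr (fun z => ?_) fun z => ?_).of_norm_right
  · simp [FormalMultilinearSeries.partialSum, mul_comm]
  · simp

lemma differentiableAt_E2 {z : ℂ} (hz : 0 < z.im) : DifferentiableAt ℂ E2 z := by
  simpa only [funext E2_eq_sigmaSeries] using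
    ((differentiableAt_sigmaSeries_qParam 1 hz).const_mul 24).const_sub 1

lemma differentiableAt_E4 {z : ℂ} (hz : 0 < z.im) : DifferentiableAt ℂ E4 z := by
  simpa only [funext E4_eq_sigmaSeries] using
    ((differentiableAt_sigmaSeries_qParam 3 hz).const_mul 240).const_add 1

lemma differentiableAt_E6 {z : ℂ} (hz : 0 < z.im) : DifferentiableAt ℂ E6 z := by
  simpa only [funext E6_eq_sigmaSeries] using
    ((differentiableAt_sigmaSeries_qParam 5 hz).const_mul 504).const_sub 1

lemma qParam_one_periodic : Function.Periodic 𝕢 1 := fun z => by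
  simp [Function.Periodic.qParam, mul_add, Complex.exp_add]

lemma E2_periodic : Function.Periodic E2 1 := fun z => by
  simp only [E2_eq_sigmaSeries, qParam_one_periodic z]

lemma E4_periodic : Function.Periodic E4 1 := fun z => by
  simp only [E4_eq_sigmaSeries, qParam_one_periodic z]

lemma E6_periodic : Function.Periodic E6 1 := fun z => by
  simp only [E6_eq_sigmaSeries, qParam_one_periodic z]

lemma phi0_periodic : Function.Periodic phi0 1 := fun z => by
  simp only [phi0, varphim4, varphim2, jInv, E2_periodic z, E4_periodic z, E6_periodic z]

lemma phim2_periodic : Function.Periodic phim2 1 := fun z => by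
  simp only [phim2, varphim4, varphim2, E2_periodic z, E4_periodic z, E6_periodic z]

lemma phim4_periodic : Function.Periodic phim4 1 := fun z => by
  simp only [phim4, varphim4, E4_periodic z, E6_periodic z]

lemma E2_coe (z : ℍ) : E2 z = EisensteinSeries.E2 z := by
  simp only [E2_eq_sigmaSeries, EisensteinSeries.E2_eq_tsum_cexp, ← tsum_sigma_mul_cexp,
    ← Complex.exp_nat_mul]
  congr! 5 with n
  ring_nf

lemma eisensteinSeries_coe_eq_sigmaSeries {k : ℕ} (hk : 3 ≤ k) (hk2 : Even k) (z : ℍ) :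
    ModularForm.E hk z = 1 - 2 * k / bernoulli k * sigmaSeries (k - 1) (𝕢 z) := by
  rw [EisensteinSeries.q_expansion_bernoulli hk hk2, ← tsum_sigma_mul_cexp]
  congr! 5 with n
  rw [zpow_natCast, ← Complex.exp_nat_mul]
  ring_nf

lemma E4_coe (z : ℍ) : E4 z = ModularForm.E₄ z := by
  have hB : bernoulli 4 = -1 / 30 := by decide +kernel
  rw [ModularForm.E₄, eisensteinSeries_coe_eq_sigmaSeries _ (by decide), E4_eq_sigmaSeries, hB]
  norm_num

lemma E6_coe (z : ℍ) : E6 z = ModularForm.E₆ z := by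
  have hB : bernoulli 6 = 1 / 42 := by decide +kernel
  rw [ModularForm.E₆, eisensteinSeries_coe_eq_sigmaSeries _ (by decide), E6_eq_sigmaSeries, hB]
  norm_num

lemma E4_cube_sub_E6_sq_ne_zero {z : ℂ} (hz : 0 < z.im) : E4 z ^ 3 - E6 z ^ 2 ≠ 0 := by
  lift z to ℍ using hz
  have hΔ := ModularForm.discriminant_eq_E₄_cube_sub_E₆_sq z
  rw [E4_coe, E6_coe]
  intro h
  exact ModularForm.discriminant_ne_zero z (by simpa [h] using hΔ)

lemma coe_mk_neg_inv (z : ℍ) : ((.mk (-(z : ℂ))⁻¹ z.im_inv_neg_coe_pos : ℍ) : ℂ) = -1 / z := by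
  change (-(z : ℂ))⁻¹ = -1 / z
  rw [neg_div, one_div, inv_neg]

lemma modularForm_mk_neg_inv {k : ℤ} (f : ModularForm 𝒮ℒ k) (z : ℍ) :
    f (.mk (-(z : ℂ))⁻¹ z.im_inv_neg_coe_pos) = (z : ℂ) ^ k * f z := by
  have hS := SlashInvariantForm.slash_S_apply f k z
  have hf := SlashInvariantForm.slash_action_eqn f (ModularGroup.S : GL (Fin 2) ℝ)
    (MonoidHom.mem_range.2 ⟨ModularGroup.S, rfl⟩)
  rw [ModularForm.SL_slash, hf, zpow_neg] at hS
  rw [hS, mul_comm, inv_mul_cancel_right₀ (zpow_ne_zero k z.ne_zero)]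

lemma E2_neg_one_div {z : ℂ} (hz : 0 < z.im) :
    E2 (-1 / z) = z ^ 2 * E2 z - 6 * I / π * z := by
  lift z to ℍ using hz
  have hz0 : (z : ℂ) ≠ 0 := z.ne_zero
  have hπ : (π : ℂ) ≠ 0 := mod_cast Real.pi_ne_zero
  have hS := SlashInvariantForm.slash_S_apply EisensteinSeries.E2 2 z
  rw [EisensteinSeries.E2_slash_action, ← E2_coe, coe_mk_neg_inv] at hS
  simp only [Pi.sub_apply, Pi.smul_apply, EisensteinSeries.D2_S, riemannZeta_two, ← E2_coe,
    smul_eq_mul] at hS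
  field_simp at hS ⊢
  linear_combination -hS

lemma E4_neg_one_div {z : ℂ} (hz : 0 < z.im) : E4 (-1 / z) = z ^ 4 * E4 z := by
  lift z to ℍ using hz
  rw [← coe_mk_neg_inv, E4_coe, E4_coe, modularForm_mk_neg_inv]
  norm_cast

lemma E6_neg_one_div {z : ℂ} (hz : 0 < z.im) : E6 (-1 / z) = z ^ 6 * E6 z := by
  lift z to ℍ using hz
  rw [← coe_mk_neg_inv, E6_coe, E6_coe, modularForm_mk_neg_inv]
  norm_cast

lemma phim4_eq (z : ℂ) : phim4 z = 1728 * E4 z ^ 2 / (E4 z ^ 3 - E6 z ^ 2) := rfl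

lemma phim2_eq (z : ℂ) :
    phim2 z = 1728 * E4 z * (E4 z * E2 z - E6 z) / (E4 z ^ 3 - E6 z ^ 2) := by
  rw [phim2, varphim4, varphim2]
  ring

lemma phi0_eq {z : ℂ} (hz : 0 < z.im) :
    phi0 z = 1728 * (E4 z * E2 z - E6 z) ^ 2 / (E4 z ^ 3 - E6 z ^ 2) := by
  have hΔ := E4_cube_sub_E6_sq_ne_zero hz
  rw [phi0, varphim4, varphim2, jInv]
  field_simp
  ring

lemma im_neg_one_div_pos {z : ℂ} (hz : 0 < z.im) : 0 < (-1 / z).im := by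
  rw [neg_div, one_div, ← inv_neg]
  exact UpperHalfPlane.im_inv_neg_coe_pos ⟨z, hz⟩

-- Both sides are `1728 / (E4³ − E6²)` times the square of `z (E4 E2 − E6) − (6i/π) E4`.
lemma phi0_neg_one_div_mul_sq {z : ℂ} (hz : 0 < z.im) :
    phi0 (-1 / z) * z ^ 2 =
      z ^ 2 * phi0 z - 12 * I / π * z * phim2 z - 36 / π ^ 2 * phim4 z := by
  have hz0 : z ≠ 0 := by rintro rfl; simp at hz
  have hN : E4 (-1 / z) * E2 (-1 / z) - E6 (-1 / z) =
      z ^ 5 * (z * (E4 z * E2 z - E6 z) - 6 * I / π * E4 z) := by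
    rw [E2_neg_one_div hz, E4_neg_one_div hz, E6_neg_one_div hz]
    ring
  have hΔ : E4 (-1 / z) ^ 3 - E6 (-1 / z) ^ 2 = z ^ 12 * (E4 z ^ 3 - E6 z ^ 2) := by
    rw [E4_neg_one_div hz, E6_neg_one_div hz]
    ring
  calc phi0 (-1 / z) * z ^ 2
      = 1728 * (z * (E4 z * E2 z - E6 z) - 6 * I / π * E4 z) ^ 2 / (E4 z ^ 3 - E6 z ^ 2) := by
        rw [phi0_eq (im_neg_one_div_pos hz), hN, hΔ]
        field_simp
    _ = z ^ 2 * phi0 z - 12 * I / π * z * phim2 z - 36 / π ^ 2 * phim4 z := by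
        rw [phi0_eq hz, phim2_eq, phim4_eq]
        linear_combination (1728 * 36 / π ^ 2 * E4 z ^ 2 / (E4 z ^ 3 - E6 z ^ 2)) * I_sq

lemma differentiableAt_phi0 {z : ℂ} (hz : 0 < z.im) : DifferentiableAt ℂ phi0 z := by
  have hE2 := differentiableAt_E2 hz
  have hE4 := differentiableAt_E4 hz
  have hE6 := differentiableAt_E6 hz
  have hΔ := E4_cube_sub_E6_sq_ne_zero hz
  unfold phi0 varphim4 varphim2 jInv
  fun_prop (disch := assumption)

/-! ### Expansions at `i∞` -/

lemma isBigO_mul_sub_mul {α 𝕜 : Type*} [NormedField 𝕜] {l : Filter α} {f f' g g' k : α → 𝕜}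
    (hf : (fun x => f x - f' x) =O[l] k) (hg : (fun x => g x - g' x) =O[l] k)
    (hf1 : f =O[l] (1 : α → 𝕜)) (hg1 : g' =O[l] (1 : α → 𝕜)) :
    (fun x => f x * g x - f' x * g' x) =O[l] k := by
  have h := (hg.mul hf1).add (hf.mul hg1)
  simp only [Pi.one_apply, mul_one] at h
  exact h.congr_left fun x => by ring

lemma isBigO_one_comp_qParam {P : ℂ → ℂ} (hP : ContinuousAt P 0) :
    (fun z => P (𝕢 z)) =O[I∞] (1 : ℂ → ℂ) :=
  (hP.tendsto.comp qParam_tendsto_zero).isBigO_one ℂ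

lemma qParam_pow_mul_isBigO (n : ℕ) {P : ℂ → ℂ} (hP : ContinuousAt P 0) :
    (fun z => 𝕢 z ^ n * P (𝕢 z)) =O[I∞] fun z => 𝕢 z ^ n := by
  simpa using (isBigO_refl (fun z => 𝕢 z ^ n) I∞).mul (isBigO_one_comp_qParam hP)

lemma continuousAt_sigmaSeries_zero (k : ℕ) : ContinuousAt (sigmaSeries k) 0 :=
  (hasFPowerSeriesOnBall_sigmaSeries k).hasFPowerSeriesAt.continuousAt

lemma E4_isBigO_one : E4 =O[I∞] (1 : ℂ → ℂ) := by
  rw [funext E4_eq_sigmaSeries]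
  exact isBigO_one_comp_qParam (((continuousAt_sigmaSeries_zero 3).const_mul 240).const_add 1)

lemma E6_isBigO_one : E6 =O[I∞] (1 : ℂ → ℂ) := by
  rw [funext E6_eq_sigmaSeries]
  exact isBigO_one_comp_qParam (continuousAt_const.sub
    ((continuousAt_sigmaSeries_zero 5).const_mul 504))

lemma E2_sub_isBigO_sq : (fun z => E2 z - (1 - 24 * 𝕢 z)) =O[I∞] fun z => 𝕢 z ^ 2 := by
  refine ((sigmaSeries_qParam_sub_isBigO 1 2).const_mul_left (-24)).congr_left fun z => ?_
  simp only [E2_eq_sigmaSeries, Finset.sum_range_succ, Finset.sum_range_zero,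
    ArithmeticFunction.map_zero, ArithmeticFunction.sigma_one, Nat.cast_zero, Nat.cast_one]
  ring

lemma E4_sub_isBigO_cube :
    (fun z => E4 z - (1 + 240 * 𝕢 z + 2160 * 𝕢 z ^ 2)) =O[I∞] fun z => 𝕢 z ^ 3 := by
  refine ((sigmaSeries_qParam_sub_isBigO 3 3).const_mul_left 240).congr_left fun z => ?_
  have h2 : σ 3 2 = 9 := by decide
  simp only [E4_eq_sigmaSeries, Finset.sum_range_succ, Finset.sum_range_zero, h2,
    ArithmeticFunction.map_zero, ArithmeticFunction.sigma_one, Nat.cast_zero, Nat.cast_one,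
    Nat.cast_ofNat]
  ring

lemma E4_sub_isBigO_sq : (fun z => E4 z - (1 + 240 * 𝕢 z)) =O[I∞] fun z => 𝕢 z ^ 2 := by
  refine ((sigmaSeries_qParam_sub_isBigO 3 2).const_mul_left 240).congr_left fun z => ?_
  simp only [E4_eq_sigmaSeries, Finset.sum_range_succ, Finset.sum_range_zero,
    ArithmeticFunction.map_zero, ArithmeticFunction.sigma_one, Nat.cast_zero, Nat.cast_one]
  ring

lemma E4_sub_one_isBigO : (fun z => E4 z - 1) =O[I∞] 𝕢 := by
  refine ((sigmaSeries_qParam_sub_isBigO 3 1).const_mul_left 240).congr (fun z => ?_)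
    fun z => pow_one _
  simp [E4_eq_sigmaSeries]

lemma E6_sub_isBigO_cube :
    (fun z => E6 z - (1 - 504 * 𝕢 z - 16632 * 𝕢 z ^ 2)) =O[I∞] fun z => 𝕢 z ^ 3 := by
  refine ((sigmaSeries_qParam_sub_isBigO 5 3).const_mul_left (-504)).congr_left fun z => ?_
  have h2 : σ 5 2 = 33 := by decide
  simp only [E6_eq_sigmaSeries, Finset.sum_range_succ, Finset.sum_range_zero, h2,
    ArithmeticFunction.map_zero, ArithmeticFunction.sigma_one, Nat.cast_zero, Nat.cast_one,
    Nat.cast_ofNat]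
  ring

lemma E6_sub_isBigO_sq : (fun z => E6 z - (1 - 504 * 𝕢 z)) =O[I∞] fun z => 𝕢 z ^ 2 := by
  refine ((sigmaSeries_qParam_sub_isBigO 5 2).const_mul_left (-504)).congr_left fun z => ?_
  simp only [E6_eq_sigmaSeries, Finset.sum_range_succ, Finset.sum_range_zero,
    ArithmeticFunction.map_zero, ArithmeticFunction.sigma_one, Nat.cast_zero, Nat.cast_one]
  ring

lemma E4_cube_sub_E6_sq_sub_isBigO :
    (fun z => E4 z ^ 3 - E6 z ^ 2 - (1728 * 𝕢 z - 41472 * 𝕢 z ^ 2)) =O[I∞] fun z => 𝕢 z ^ 3 := by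
  have ha : (fun z => 1 + 240 * 𝕢 z + 2160 * 𝕢 z ^ 2) =O[I∞] (1 : ℂ → ℂ) :=
    isBigO_one_comp_qParam (P := fun q => 1 + 240 * q + 2160 * q ^ 2) (by fun_prop)
  have hb : (fun z => 1 - 504 * 𝕢 z - 16632 * 𝕢 z ^ 2) =O[I∞] (1 : ℂ → ℂ) :=
    isBigO_one_comp_qParam (P := fun q => 1 - 504 * q - 16632 * q ^ 2) (by fun_prop)
  have hE4 := E4_sub_isBigO_cube
  have hE4_sq := isBigO_mul_sub_mul hE4 hE4 E4_isBigO_one ha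
  have hE4_cube := isBigO_mul_sub_mul hE4 hE4_sq E4_isBigO_one
    ((ha.mul ha).congr_right fun _ => mul_one 1)
  have hE6_sq := isBigO_mul_sub_mul E6_sub_isBigO_cube E6_sub_isBigO_cube E6_isBigO_one hb
  have htail := qParam_pow_mul_isBigO 3 (P := fun q =>
    169344 + 110621376 * q + 3359232000 * q ^ 2 + 10077696000 * q ^ 3) (by fun_prop)
  exact ((hE4_cube.sub hE6_sq).add htail).congr_left fun z => by ring

lemma E4_cube_sub_E6_sq_sub_isBigO_sq :
    (fun z => E4 z ^ 3 - E6 z ^ 2 - 1728 * 𝕢 z) =O[I∞] fun z => 𝕢 z ^ 2 := by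
  have hcube := qParam_pow_mul_isBigO 2 (P := fun q => q) continuousAt_id
  have hsq := qParam_pow_mul_isBigO 2 (P := fun _ => -41472) continuousAt_const
  refine ((E4_cube_sub_E6_sq_sub_isBigO.trans (hcube.congr_left fun z => ?_)).add hsq).congr_left
    fun z => ?_ <;> ring

lemma E4_cube_sub_E6_sq_inv_isBigO :
    (fun z => (E4 z ^ 3 - E6 z ^ 2)⁻¹) =O[I∞] fun z => (𝕢 z)⁻¹ := by
  have hsq : (fun z => 𝕢 z ^ 2) =o[I∞] fun z => 𝕢 z ^ 1 :=
    (isLittleO_pow_pow one_lt_two).comp_tendsto qParam_tendsto_zero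
  have hequiv : (fun z => E4 z ^ 3 - E6 z ^ 2) ~[I∞] fun z => 1728 * 𝕢 z :=
    E4_cube_sub_E6_sq_sub_isBigO_sq.trans_isLittleO
      (by simpa only [pow_one] using hsq.const_mul_right (by norm_num))
  exact hequiv.inv.isBigO.trans
    ((isBigO_const_mul_self 1728⁻¹ _ I∞).congr_left fun z => (mul_inv 1728 (𝕢 z)).symm)

lemma E4_mul_E2_sub_E6_sub_isBigO :
    (fun z => E4 z * E2 z - E6 z - 720 * 𝕢 z) =O[I∞] fun z => 𝕢 z ^ 2 := by
  have hb := isBigO_one_comp_qParam (P := fun q => 1 - 24 * q) (by fun_prop)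
  have hprod := isBigO_mul_sub_mul E4_sub_isBigO_sq E2_sub_isBigO_sq E4_isBigO_one hb
  have htail := qParam_pow_mul_isBigO 2 (P := fun _ => -5760) continuousAt_const
  exact ((hprod.sub E6_sub_isBigO_sq).add htail).congr_left fun z => by ring

lemma E4_mul_E2_sub_E6_isBigO : (fun z => E4 z * E2 z - E6 z) =O[I∞] 𝕢 := by
  have hsq := qParam_pow_mul_isBigO 1 (P := fun q => q) continuousAt_id
  simp only [pow_one, ← sq] at hsq
  exact ((E4_mul_E2_sub_E6_sub_isBigO.trans hsq).add
    ((isBigO_refl 𝕢 I∞).const_mul_left 720)).congr_left fun z => by ring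

lemma eventually_im_pos_comap_im_atTop : ∀ᶠ z in I∞, 0 < z.im :=
  (eventually_gt_atTop 0).comap Complex.im

lemma phi0_isBigO : phi0 =O[I∞] 𝕢 := by
  have hN := E4_mul_E2_sub_E6_isBigO
  refine (((hN.mul hN).mul E4_cube_sub_E6_sq_inv_isBigO).const_mul_left 1728).congr' ?_ ?_
  · filter_upwards [eventually_im_pos_comap_im_atTop] with z hz
    rw [phi0_eq hz]
    ring
  · exact .of_forall fun z => by field_simp [Function.Periodic.qParam_ne_zero]

lemma phim2_sub_isBigO : (fun z => phim2 z - 720) =O[I∞] 𝕢 := by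
  have hnum : (fun z => 1728 * E4 z * (E4 z * E2 z - E6 z) - 720 * (E4 z ^ 3 - E6 z ^ 2))
      =O[I∞] fun z => 𝕢 z ^ 2 := by
    have hprod := E4_sub_one_isBigO.mul E4_mul_E2_sub_E6_isBigO
    simp only [← sq] at hprod
    exact (((hprod.add E4_mul_E2_sub_E6_sub_isBigO).const_mul_left 1728).sub
      (E4_cube_sub_E6_sq_sub_isBigO_sq.const_mul_left 720)).congr_left fun z => by ring
  refine (hnum.mul E4_cube_sub_E6_sq_inv_isBigO).congr' ?_ ?_
  · filter_upwards [eventually_im_pos_comap_im_atTop] with z hz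
    have hΔ := E4_cube_sub_E6_sq_ne_zero hz
    rw [phim2_eq]
    field_simp
  · exact .of_forall fun z => by field_simp [Function.Periodic.qParam_ne_zero]

lemma phim4_sub_isBigO : (fun z => phim4 z - (𝕢 z)⁻¹ - 504) =O[I∞] 𝕢 := by
  have hE4_sq : (fun z => E4 z ^ 2 - (1 + 480 * 𝕢 z)) =O[I∞] fun z => 𝕢 z ^ 2 := by
    have ha := isBigO_one_comp_qParam (P := fun q => 1 + 240 * q) (by fun_prop)
    have htail := qParam_pow_mul_isBigO 2 (P := fun _ => 57600) continuousAt_const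
    exact ((isBigO_mul_sub_mul E4_sub_isBigO_sq E4_sub_isBigO_sq E4_isBigO_one ha).add
      htail).congr_left fun z => by ring
  have hnum : (fun z => 1728 * 𝕢 z * E4 z ^ 2 - (1 + 504 * 𝕢 z) * (E4 z ^ 3 - E6 z ^ 2))
      =O[I∞] fun z => 𝕢 z ^ 3 := by
    have hE4_term := (isBigO_refl 𝕢 I∞).mul hE4_sq
    have hΔ_term := (isBigO_refl 𝕢 I∞).mul E4_cube_sub_E6_sq_sub_isBigO_sq
    simp only [← pow_succ'] at hE4_term hΔ_term
    exact (((hE4_term.const_mul_left 1728).sub (hΔ_term.const_mul_left 504)).sub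
      E4_cube_sub_E6_sq_sub_isBigO).congr_left fun z => by ring
  refine (hnum.mul (E4_cube_sub_E6_sq_inv_isBigO.mul (isBigO_refl (fun z => (𝕢 z)⁻¹) I∞))).congr'
    ?_ ?_
  · filter_upwards [eventually_im_pos_comap_im_atTop] with z hz
    have hΔ := E4_cube_sub_E6_sq_ne_zero hz
    have hq : 𝕢 z ≠ 0 := Function.Periodic.qParam_ne_zero z
    rw [phim4_eq]
    field_simp
    ring
  · exact .of_forall fun z => by field_simp [Function.Periodic.qParam_ne_zero]

/-! ### The inverted form `φ₀(-1/z) z²` -/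

lemma pow_mul_qParam_isBigO_exp (w : ℝ) (n : ℕ) {b : ℝ} (hb : b < 2 * π) :
    (fun z => z ^ n * 𝕢 z) =O[stripAtImInfty w] fun z => Real.exp (-b * z.im) := by
  have hid : (fun z : ℂ => z) =O[stripAtImInfty w] Complex.im := by
    refine .of_bound (w + 1) ?_
    filter_upwards [eventually_stripAtImInfty w 1] with z ⟨hre, him⟩
    have hw : 0 ≤ w := (abs_nonneg _).trans hre
    calc ‖z‖ ≤ |z.re| + |z.im| := z.norm_le_abs_re_add_abs_im
      _ ≤ w * |z.im| + |z.im| := by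
        gcongr
        exact hre.trans (le_mul_of_one_le_right hw (him.trans (le_abs_self _)))
      _ = (w + 1) * ‖z.im‖ := by rw [Real.norm_eq_abs]; ring
  have hpow : (fun z : ℂ => z.im ^ n) =O[stripAtImInfty w]
      fun z => Real.exp ((2 * π - b) * z.im) :=
    ((isLittleO_pow_exp_pos_mul_atTop n (sub_pos.2 hb)).isBigO.comp_tendsto
      tendsto_comap).mono inf_le_left
  have hq : 𝕢 =O[stripAtImInfty w] fun z => Real.exp (-2 * π * z.im) :=
    .of_norm_left (.of_bound 1 (.of_forall fun z => by simp [Function.Periodic.norm_qParam]))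
  refine (((hid.pow n).trans hpow).mul hq).congr_right fun z => ?_
  rw [← Real.exp_add]
  ring_nf

/-- The weight `-2` slash transform of `φ_0` by the inversion `z ↦ -1/z`, the factor of the
integrands of `a` on the segments to `i`. -/
noncomputable def slashPhi0 (z : ℂ) : ℂ := phi0 (-1 / z) * z ^ 2

/-- The part of `slashPhi0` that does not decay at `i∞`. -/
noncomputable def slashPhi0Principal (z : ℂ) : ℂ :=
  -(36 / π ^ 2) * cexp (-2 * π * I * z) - 8640 * I / π * z - 18144 / π ^ 2

/-- The part of `slashPhi0` that decays exponentially at `i∞`. -/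
noncomputable def slashPhi0Remainder (z : ℂ) : ℂ := slashPhi0 z - slashPhi0Principal z

lemma slashPhi0Remainder_eq {z : ℂ} (hz : 0 < z.im) :
    slashPhi0Remainder z = z ^ 2 * phi0 z - 12 * I / π * z * (phim2 z - 720) -
      36 / π ^ 2 * (phim4 z - (𝕢 z)⁻¹ - 504) := by
  have hq : (𝕢 z)⁻¹ = cexp (-2 * π * I * z) := by
    rw [Function.Periodic.qParam, ← Complex.exp_neg]
    congr 1
    push_cast
    ring
  rw [slashPhi0Remainder, slashPhi0, slashPhi0Principal, phi0_neg_one_div_mul_sq hz, hq]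
  ring

lemma slashPhi0Remainder_isBigO_exp (w : ℝ) {b : ℝ} (hb : b < 2 * π) :
    slashPhi0Remainder =O[stripAtImInfty w] fun z => Real.exp (-b * z.im) := by
  have hterm (n : ℕ) (c : ℂ) {f : ℂ → ℂ} (hf : f =O[I∞] 𝕢) :
      (fun z => c * (z ^ n * f z)) =O[stripAtImInfty w] fun z => Real.exp (-b * z.im) :=
    (((isBigO_refl (fun z : ℂ => z ^ n) _).mul (hf.mono inf_le_left)).trans
      (pow_mul_qParam_isBigO_exp w n hb)).const_mul_left c
  refine (((hterm 2 1 phi0_isBigO).sub (hterm 1 (12 * I / π) phim2_sub_isBigO)).sub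
    (hterm 0 (36 / π ^ 2) phim4_sub_isBigO)).congr' ?_ .rfl
  filter_upwards [inf_le_left (a := I∞) eventually_im_pos_comap_im_atTop] with z hz
  rw [slashPhi0Remainder_eq hz]
  ring

-- `slashPhi0Remainder` is a polynomial of degree 2 in `z` with leading coefficient `φ_0` and
-- 1-periodic coefficients.
lemma slashPhi0Remainder_second_difference {z : ℂ} (hz : 0 < z.im) :
    slashPhi0Remainder (z + 1) + slashPhi0Remainder (z - 1) - 2 * slashPhi0Remainder z =
      2 * phi0 z := by
  rw [slashPhi0Remainder_eq hz, slashPhi0Remainder_eq (z := z + 1) (by simpa),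
    slashPhi0Remainder_eq (z := z - 1) (by simpa), phi0_periodic, phim2_periodic, phim4_periodic,
    qParam_one_periodic, phi0_periodic.sub_eq, phim2_periodic.sub_eq, phim4_periodic.sub_eq,
    qParam_one_periodic.sub_eq]
  ring

lemma differentiableAt_slashPhi0 {z : ℂ} (hz : 0 < z.im) : DifferentiableAt ℂ slashPhi0 z := by
  have hz0 : z ≠ 0 := by rintro rfl; simp at hz
  have hinv : DifferentiableAt ℂ (fun w : ℂ => -1 / w) z := by fun_prop (disch := assumption)
  exact ((differentiableAt_phi0 (im_neg_one_div_pos hz)).comp z hinv).mul (by fun_prop)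

lemma slashPhi0_isBigO_sq : slashPhi0 =O[𝓝[imCone \ {0}] 0] fun z => ‖z - 0‖ ^ 2 := by
  have hphi0 : (fun z => phi0 (-1 / z)) =O[𝓝[imCone \ {0}] 0] (1 : ℂ → ℂ) :=
    (phi0_isBigO.trans (qParam_tendsto_zero.isBigO_one ℂ)).comp_tendsto tendsto_neg_one_div_imCone
  exact (hphi0.mul (isBigO_refl (fun z : ℂ => z ^ 2) _)).trans (.of_bound 1 (by simp))

lemma differentiableOn_slashPhi0 : DifferentiableOn ℂ slashPhi0 imCone := by
  intro z hz
  rcases eq_or_ne z 0 with rfl | hz0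
  · have hO : slashPhi0 =O[𝓝[imCone] 0] fun z => ‖z - 0‖ ^ 2 := by
      rw [← Set.insert_eq_of_mem zero_mem_imCone, ← Set.insert_sdiff_singleton,
        nhdsWithin_insert]
      exact .sup (isBigO_pure.2 (by simp [slashPhi0])) slashPhi0_isBigO_sq
    exact (hO.hasFDerivWithinAt hz one_lt_two).differentiableWithinAt
  · exact (differentiableAt_slashPhi0 (im_pos_of_mem_imCone hz hz0)).differentiableWithinAt

lemma differentiable_slashPhi0Principal : Differentiable ℂ slashPhi0Principal := by
  unfold slashPhi0Principal
  fun_prop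

lemma differentiableOn_slashPhi0Remainder : DifferentiableOn ℂ slashPhi0Remainder imCone :=
  differentiableOn_slashPhi0.sub differentiable_slashPhi0Principal.differentiableOn

/-! ### The contour integral -/

/-- The factor `e^{πi r² z}` of the integrands of `a`, the complexified Gaussian evaluated on
vectors of length `r`. -/
noncomputable def complexGaussian (r : ℝ) (z : ℂ) : ℂ := cexp (π * I * r ^ 2 * z)

lemma complexGaussian_add (r : ℝ) (z w : ℂ) :
    complexGaussian r (z + w) = complexGaussian r z * complexGaussian r w := by
  rw [complexGaussian, mul_add, Complex.exp_add, complexGaussian, complexGaussian]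

lemma complexGaussian_neg_one_mul_one (r : ℝ) :
    complexGaussian r (-1) * complexGaussian r 1 = 1 := by
  rw [← complexGaussian_add, neg_add_cancel, complexGaussian, mul_zero, Complex.exp_zero]

lemma hasDerivAt_complexGaussian (r : ℝ) (z : ℂ) :
    HasDerivAt (complexGaussian r) (complexGaussian r z * (π * I * r ^ 2)) z :=
  ((hasDerivAt_id z).const_mul (π * I * (r : ℂ) ^ 2)).cexp.congr_deriv (by simp [complexGaussian])

lemma differentiable_complexGaussian (r : ℝ) : Differentiable ℂ (complexGaussian r) :=
  fun z => (hasDerivAt_complexGaussian r z).differentiableAt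

lemma norm_complexGaussian (r : ℝ) (z : ℂ) :
    ‖complexGaussian r z‖ = Real.exp (-(π * r ^ 2 * z.im)) := by
  have hre : (π * I * r ^ 2 * z : ℂ) = ((π * r ^ 2 : ℝ) : ℂ) * (I * z) := by
    push_cast
    ring
  rw [complexGaussian, Complex.norm_exp, hre, Complex.re_ofReal_mul, Complex.I_mul_re, mul_neg]

lemma complexGaussian_isBigO_one (r w : ℝ) :
    complexGaussian r =O[stripAtImInfty w] (1 : ℂ → ℝ) := by
  refine .of_bound 1 ?_
  filter_upwards [eventually_stripAtImInfty w 0] with z ⟨_, him⟩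
  rw [norm_complexGaussian]
  simpa using (by positivity : 0 ≤ π * r ^ 2 * z.im)

lemma isBigO_exp_mul_complexGaussian {f : ℂ → ℂ} {w b : ℝ}
    (hf : f =O[stripAtImInfty w] fun z => Real.exp (-b * z.im)) (r : ℝ) :
    (fun z => f z * complexGaussian r z) =O[stripAtImInfty w] fun z => Real.exp (-b * z.im) :=
  (hf.mul (complexGaussian_isBigO_one r w)).congr_right fun _ => mul_one _

lemma complexGaussian_second_difference (r : ℝ) :
    complexGaussian r (-1) + complexGaussian r 1 - 2 =
      -4 * (Real.sin (π * r ^ 2 / 2) : ℂ) ^ 2 := by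
  have hcos : complexGaussian r 1 + complexGaussian r (-1) =
      2 * Complex.cos (2 * (π * r ^ 2 / 2)) := by
    rw [Complex.two_cos, complexGaussian, complexGaussian]
    ring_nf
  rw [Complex.cos_two_mul, Complex.cos_sq'] at hcos
  push_cast
  linear_combination hcos

/-- The quotient by `complexGaussian r` of an antiderivative of
`slashPhi0Principal * complexGaussian r`. It is a combination of `e^{-2πiz}`, `z` and `1`; the
divisions are by zero if `r = 0` or `r ^ 2 = 2`. -/
noncomputable def principalPrimitive (r : ℝ) (z : ℂ) : ℂ :=
  -(36 / π ^ 2) * cexp (-2 * π * I * z) / (π * I * (r ^ 2 - 2))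
    - 8640 * I / π * (z / (π * I * r ^ 2) - 1 / (π * I * r ^ 2) ^ 2)
    - 18144 / π ^ 2 / (π * I * r ^ 2)

lemma hasDerivAt_complexGaussian_mul_principalPrimitive {r : ℝ} (h0 : (r : ℂ) ≠ 0)
    (h2 : (r : ℂ) ^ 2 - 2 ≠ 0) (z : ℂ) :
    HasDerivAt (fun z => complexGaussian r z * principalPrimitive r z)
      (slashPhi0Principal z * complexGaussian r z) z := by
  have hπ : (π : ℂ) ≠ 0 := mod_cast Real.pi_ne_zero
  have hexp : HasDerivAt (fun z => cexp (-2 * π * I * z))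
      (cexp (-2 * π * I * z) * (-2 * π * I)) z := by
    simpa using ((hasDerivAt_id z).const_mul (-2 * π * I : ℂ)).cexp
  have hprim : HasDerivAt (principalPrimitive r)
      (-(36 / π ^ 2) * (cexp (-2 * π * I * z) * (-2 * π * I)) / (π * I * (r ^ 2 - 2)) -
        8640 * I / π * (1 / (π * I * r ^ 2))) z :=
    (((hexp.const_mul _).div_const _).sub
      ((((hasDerivAt_id z).div_const _).sub_const _).const_mul _)).sub_const _
  refine ((hasDerivAt_complexGaussian r z).mul hprim).congr_deriv ?_
  rw [slashPhi0Principal, principalPrimitive]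
  field_simp
  ring

lemma principalPrimitive_second_difference (r : ℝ) (z : ℂ) :
    principalPrimitive r (z + 1) + principalPrimitive r (z - 1) - 2 * principalPrimitive r z =
      0 := by
  have hexp : Function.Periodic (fun z => cexp (-2 * π * I * z)) 1 := fun z => by
    simpa [mul_add, sub_eq_add_neg] using Complex.exp_periodic.sub_eq (-2 * π * I * z)
  simp only [principalPrimitive, hexp z, hexp.sub_eq z]
  ring

lemma principalPrimitive_zero {r : ℝ} (h0 : (r : ℂ) ≠ 0) (h2 : (r : ℂ) ^ 2 - 2 ≠ 0) :
    principalPrimitive r 0 = I * (36 / (π ^ 3 * (r ^ 2 - 2)) - 8640 / (π ^ 3 * r ^ 4) +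
      18144 / (π ^ 3 * r ^ 2)) := by
  have hπ : (π : ℂ) ≠ 0 := mod_cast Real.pi_ne_zero
  have hI := Complex.I_ne_zero
  rw [principalPrimitive, mul_zero, Complex.exp_zero]
  field_simp
  ring_nf
  simp only [I_sq]
  ring

lemma slashPhi0Remainder_mul_complexGaussian_isBigO (r w : ℝ) :
    (fun z => slashPhi0Remainder z * complexGaussian r z) =O[stripAtImInfty w]
      fun z => Real.exp (-1 * z.im) :=
  isBigO_exp_mul_complexGaussian
    (slashPhi0Remainder_isBigO_exp w (by linarith [Real.pi_gt_three])) r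

lemma differentiableOn_slashPhi0Remainder_mul_complexGaussian (r : ℝ) :
    DifferentiableOn ℂ (fun z => slashPhi0Remainder z * complexGaussian r z) imCone :=
  differentiableOn_slashPhi0Remainder.mul (differentiable_complexGaussian r).differentiableOn

lemma integrableOn_slashPhi0Remainder_mul_complexGaussian (r : ℝ) {x y : ℝ} (hxy : |x| ≤ y) :
    IntegrableOn (fun t : ℝ => slashPhi0Remainder (I * t + x) * complexGaussian r (I * t + x))
      (Set.Ioi y) :=
  integrableOn_I_mul_add (differentiableOn_slashPhi0Remainder_mul_complexGaussian r).continuousOn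
    one_pos (slashPhi0Remainder_mul_complexGaussian_isBigO r |x|) hxy

lemma segInt_slashPhi0_mul_complexGaussian {r : ℝ} (h0 : (r : ℂ) ≠ 0)
    (h2 : (r : ℂ) ^ 2 - 2 ≠ 0) {x : ℝ} (hx : |x| ≤ 1) :
    segInt 0 (I + x) (fun z => slashPhi0 z * complexGaussian r z) =
      rayIntFrom 0 (fun z => slashPhi0Remainder z * complexGaussian r z) -
        principalPrimitive r 0 + complexGaussian r (I + x) * principalPrimitive r (I + x) -
        rayIntFrom 1 (fun z => slashPhi0Remainder (z + x) * complexGaussian r (z + x)) := by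
  have hmem : I + x ∈ imCone := by simpa using I_mul_add_mem_imCone hx
  have hR := differentiableOn_slashPhi0Remainder_mul_complexGaussian r
  have hQ : Differentiable ℂ fun z => slashPhi0Principal z * complexGaussian r z :=
    differentiable_slashPhi0Principal.mul (differentiable_complexGaussian r)
  have hsplit : (fun z => slashPhi0 z * complexGaussian r z) = fun z =>
      slashPhi0Remainder z * complexGaussian r z + slashPhi0Principal z * complexGaussian r z := by
    funext z
    rw [slashPhi0Remainder]
    ring
  have hshift := segInt_add_rayIntFrom_eq_rayIntFrom hR one_pos
    (slashPhi0Remainder_mul_complexGaussian_isBigO r |x|) hx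
  have hprim := segInt_eq_sub_of_hasDerivWithinAt convex_univ
    (fun z _ => (hasDerivAt_complexGaussian_mul_principalPrimitive h0 h2 z).hasDerivWithinAt)
    hQ.continuous.continuousOn (Set.mem_univ 0) (Set.mem_univ (I + x))
  have hone : complexGaussian r 0 = 1 := by simp [complexGaussian]
  rw [Complex.ofReal_one, mul_one] at hshift
  rw [hsplit, segInt_add convex_imCone hR.continuousOn hQ.continuous.continuousOn zero_mem_imCone
    hmem, hprim, hone, one_mul, ← hshift]
  ring

lemma rayIntFrom_slashPhi0Remainder_second_difference (r : ℝ) :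
    complexGaussian r (-1) *
        rayIntFrom 1 (fun z => slashPhi0Remainder (z + 1) * complexGaussian r (z + 1)) +
      complexGaussian r 1 *
        rayIntFrom 1 (fun z => slashPhi0Remainder (z - 1) * complexGaussian r (z - 1)) -
      2 * rayIntFrom 1 (fun z => slashPhi0Remainder z * complexGaussian r z) =
    2 * rayIntFrom 1 (fun z => phi0 z * complexGaussian r z) := by
  have hint {x : ℝ} (hx : |x| ≤ 1) := integrableOn_slashPhi0Remainder_mul_complexGaussian r hx
  have hint_one := hint (x := 1) (by simp)
  have hint_neg_one := hint (x := -1) (by simp)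
  have hint_zero := hint (x := 0) (by simp)
  simp only [Complex.ofReal_one, Complex.ofReal_neg, Complex.ofReal_zero, add_zero,
    ← sub_eq_add_neg] at hint_one hint_neg_one hint_zero
  simp only [← rayIntFrom_const_mul]
  simp only [rayIntFrom, ← mul_add, ← mul_sub]
  rw [← integral_add (hint_one.const_mul _) (hint_neg_one.const_mul _), ← integral_sub _
    (hint_zero.const_mul _)]
  · congr 1
    refine setIntegral_congr_fun measurableSet_Ioi fun t ht => ?_
    have him : 0 < (I * t : ℂ).im := by simpa using one_pos.trans ht
    have hdiff := slashPhi0Remainder_second_difference him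
    have hone := complexGaussian_neg_one_mul_one r
    rw [sub_eq_add_neg (I * t : ℂ), complexGaussian_add, complexGaussian_add, ← sub_eq_add_neg]
    linear_combination complexGaussian r (I * t) * hdiff + complexGaussian r (I * t) *
      (slashPhi0Remainder (I * t + 1) + slashPhi0Remainder (I * t - 1)) * hone
  · exact (hint_one.const_mul _).add (hint_neg_one.const_mul _)

lemma aRad_eq_segInt_slashPhi0 (r : ℝ) :
    aRad r = complexGaussian r (-1) *
        segInt 0 (I + 1) (fun z => slashPhi0 z * complexGaussian r z) +
      complexGaussian r 1 * segInt 0 (I - 1) (fun z => slashPhi0 z * complexGaussian r z) -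
      2 * segInt 0 I (fun z => slashPhi0 z * complexGaussian r z) +
      2 * rayIntFrom 1 (fun z => phi0 z * complexGaussian r z) := by
  have htranslate (w : ℂ) : segInt w I (fun z => slashPhi0 (z - w) * complexGaussian r z) =
      complexGaussian r w *
        segInt 0 (I - w) (fun z => slashPhi0 z * complexGaussian r z) := by
    have h := segInt_comp_add_right w I (-w) (fun z => slashPhi0 z * complexGaussian r z)
    rw [add_neg_cancel, ← sub_eq_add_neg] at h
    rw [← h, ← segInt_const_mul]
    congr 1
    funext z
    rw [mul_left_comm, ← complexGaussian_add, add_neg_cancel_comm_assoc, ← sub_eq_add_neg]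
  have hneg := htranslate (-1)
  simp only [sub_neg_eq_add] at hneg
  rw [← hneg, ← htranslate 1]
  rfl

lemma aRad_eq_sin_sq_mul {r : ℝ} (h0 : (r : ℂ) ≠ 0) (h2 : (r : ℂ) ^ 2 - 2 ≠ 0) :
    aRad r = -4 * (Real.sin (π * r ^ 2 / 2) : ℂ) ^ 2 *
      (rayIntFrom 0 (fun z => slashPhi0Remainder z * complexGaussian r z) -
        principalPrimitive r 0) := by
  have hseg {x : ℝ} (hx : |x| ≤ 1) := segInt_slashPhi0_mul_complexGaussian h0 h2 hx
  have hseg_one := hseg (x := 1) (by simp)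
  have hseg_neg_one := hseg (x := -1) (by simp)
  have hseg_zero := hseg (x := 0) (by simp)
  simp only [Complex.ofReal_one, Complex.ofReal_neg, Complex.ofReal_zero, add_zero,
    ← sub_eq_add_neg] at hseg_one hseg_neg_one hseg_zero
  have hgauss : complexGaussian r (I + 1) = complexGaussian r I * complexGaussian r 1 ∧
      complexGaussian r (I - 1) = complexGaussian r I * complexGaussian r (-1) :=
    ⟨complexGaussian_add r I 1, complexGaussian_add r I (-1)⟩
  rw [aRad_eq_segInt_slashPhi0, hseg_one, hseg_neg_one, hseg_zero, hgauss.1, hgauss.2,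
    ← rayIntFrom_slashPhi0Remainder_second_difference, ← complexGaussian_second_difference]
  linear_combination complexGaussian r I * principalPrimitive_second_difference r I +
    complexGaussian r I * (principalPrimitive r (I + 1) + principalPrimitive r (I - 1)) *
      complexGaussian_neg_one_mul_one r

lemma slashPhi0Remainder_mul_complexGaussian_I_mul (r t : ℝ) :
    slashPhi0Remainder (I * t) * complexGaussian r (I * t) =
      -((t ^ 2 * phi0 (I / t) - 36 / π ^ 2 * cexp (2 * π * t) + 8640 / π * t - 18144 / π ^ 2) *
        cexp (-π * r ^ 2 * t)) := by
  have hinv : -1 / (I * t) = I / t := by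
    rw [← Complex.I_mul_I, mul_div_mul_left _ _ Complex.I_ne_zero]
  have hexp : -2 * (π : ℂ) * I * (I * t) = 2 * π * t := by
    linear_combination -2 * (π : ℂ) * t * I_sq
  have hgauss : (π : ℂ) * I * r ^ 2 * (I * t) = -π * r ^ 2 * t := by
    linear_combination (π : ℂ) * r ^ 2 * t * I_sq
  rw [slashPhi0Remainder, slashPhi0, slashPhi0Principal, complexGaussian, hinv, hexp, hgauss]
  linear_combination cexp (-π * r ^ 2 * t) * (phi0 (I / t) * t ^ 2 + 8640 / π * t) * I_sq

/-- **Proposition 3.** For `r ≥ 0` with `r ≠ 0`, `r ≠ √2`: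
`a(r) = 4i sin²(πr²/2) (36/(π³(r²−2)) − 8640/(π³r⁴) + 18144/(π³r²)`
`        + ∫₀^∞ (t²φ₀(i/t) − (36/π²)e^{2πt} + (8640/π)t − 18144/π²) e^{−πr²t} dt)`,
and the integral converges absolutely for all `r ≥ 0`. -/
theorem aRad_integral_representation (r : ℝ) (hr : 0 ≤ r) (hr0 : r ≠ 0)
    (hr2 : r ≠ Real.sqrt 2) :
    (∀ s : ℝ, 0 ≤ s → IntegrableOn
      (fun t : ℝ => ((t : ℂ) ^ 2 * phi0 (Complex.I / (t : ℂ))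
          - (36 / (Real.pi : ℂ) ^ 2) * Complex.exp (2 * (Real.pi : ℂ) * (t : ℂ))
          + (8640 / (Real.pi : ℂ)) * (t : ℂ) - 18144 / (Real.pi : ℂ) ^ 2) *
        Complex.exp (-(Real.pi : ℂ) * (s : ℂ) ^ 2 * (t : ℂ))) (Set.Ioi 0)) ∧
    aRad r = 4 * Complex.I * ((Real.sin (Real.pi * r ^ 2 / 2) : ℂ)) ^ 2 *
      (36 / ((Real.pi : ℂ) ^ 3 * ((r : ℂ) ^ 2 - 2)) - 8640 / ((Real.pi : ℂ) ^ 3 * (r : ℂ) ^ 4)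
        + 18144 / ((Real.pi : ℂ) ^ 3 * (r : ℂ) ^ 2)
        + ∫ t in Set.Ioi (0 : ℝ), ((t : ℂ) ^ 2 * phi0 (Complex.I / (t : ℂ))
            - (36 / (Real.pi : ℂ) ^ 2) * Complex.exp (2 * (Real.pi : ℂ) * (t : ℂ))
            + (8640 / (Real.pi : ℂ)) * (t : ℂ) - 18144 / (Real.pi : ℂ) ^ 2) *
          Complex.exp (-(Real.pi : ℂ) * (r : ℂ) ^ 2 * (t : ℂ))) := by
  have h0 : (r : ℂ) ≠ 0 := mod_cast hr0
  have h2 : (r : ℂ) ^ 2 - 2 ≠ 0 := fun h =>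
    hr2 (((Real.sqrt_eq_iff_eq_sq zero_le_two hr).2 (mod_cast (sub_eq_zero.1 h).symm)).symm)
  have hintegrand (s t : ℝ) := neg_eq_iff_eq_neg.2
    (slashPhi0Remainder_mul_complexGaussian_I_mul s t)
  simp only [← hintegrand]
  refine ⟨fun s _ => ?_, ?_⟩
  · simpa using (integrableOn_slashPhi0Remainder_mul_complexGaussian s abs_zero.le).neg
  · rw [aRad_eq_sin_sq_mul h0 h2, principalPrimitive_zero h0 h2, rayIntFrom, integral_neg]
    ring
end

section
/- Let h = 128(θ00⁴ + θ01⁴)/θ10⁸ on the upper half-plane ℍ. Then h is holomorphic on ℍ and, for every matrix (a b; c d) ∈ SL₂(ℤ) with c ≡ 0 (mod 2), h((az+b)/(cz+d)) = (cz+d)^{−2} h(z) for all z ∈ ℍ; i.e., h is modular of weight −2 for Γ0(2). -/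
open MeasureTheory

/-- The theta constant `θ00`. -/
noncomputable def theta00 (z : ℂ) : ℂ :=
  ∑' n : ℤ, Complex.exp ((Real.pi : ℂ) * Complex.I * (n : ℂ) ^ 2 * z)

/-- The theta constant `θ01`. -/
noncomputable def theta01 (z : ℂ) : ℂ :=
  ∑' n : ℤ, (-1 : ℂ) ^ n * Complex.exp ((Real.pi : ℂ) * Complex.I * (n : ℂ) ^ 2 * z)

/-- The theta constant `θ10`. -/
noncomputable def theta10 (z : ℂ) : ℂ :=
  ∑' n : ℤ, Complex.exp ((Real.pi : ℂ) * Complex.I * ((n : ℂ) + 1/2) ^ 2 * z)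

/-- `ψ_I = 128(θ00⁴+θ01⁴)/θ10⁸ + 128(θ01⁴−θ10⁴)/θ00⁸`. -/
noncomputable def psiI (z : ℂ) : ℂ :=
  128 * (theta00 z ^ 4 + theta01 z ^ 4) / theta10 z ^ 8 +
    128 * (theta01 z ^ 4 - theta10 z ^ 4) / theta00 z ^ 8

/-- `ψ_T = 128(θ00⁴+θ01⁴)/θ10⁸ + 128(θ00⁴+θ10⁴)/θ01⁸`. -/
noncomputable def psiT (z : ℂ) : ℂ :=
  128 * (theta00 z ^ 4 + theta01 z ^ 4) / theta10 z ^ 8 +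
    128 * (theta00 z ^ 4 + theta10 z ^ 4) / theta01 z ^ 8

/-- `ψ_S = −128(θ00⁴+θ10⁴)/θ01⁸ − 128(θ10⁴−θ01⁴)/θ00⁸`. -/
noncomputable def psiS (z : ℂ) : ℂ :=
  -128 * (theta00 z ^ 4 + theta10 z ^ 4) / theta01 z ^ 8 -
    128 * (theta10 z ^ 4 - theta01 z ^ 4) / theta00 z ^ 8

/-- The weakly holomorphic modular form `h = 128(θ00⁴ + θ01⁴)/θ10⁸`. -/
noncomputable def hFn (z : ℂ) : ℂ := 128 * (theta00 z ^ 4 + theta01 z ^ 4) / theta10 z ^ 8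

/-!
Up to sign, the fourth powers of the theta constants are permuted by the weight two action of the
generators `S` and `T` of `SL(2, ℤ)`. Hence `(θ00 θ01 θ10)⁸` is a level one cusp form of weight 12,
so a multiple of `Δ`; the multiple is nonzero because the theta constants do not vanish at `i`, and
as `Δ` has no zeros on `ℍ`, neither has `θ10`. The same permutation shows that `h` has three
conjugates under the weight `-2` action, which `S` and `T` move in the way they move the nonzero row
vectors over `ℤ/2ℤ`, with `h` corresponding to `(0, 1)`, the row stabilized by `Γ₀(2)`.
-/

open Complex ModularGroup Filter Matrix Topology
open UpperHalfPlane hiding I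
open scoped MatrixGroups ModularForm Manifold

section ThetaConstants

lemma theta00_eq_jacobiTheta₂ (z : ℂ) : theta00 z = jacobiTheta₂ 0 z := by
  simp [theta00, jacobiTheta₂, jacobiTheta₂_term]

lemma exp_pi_mul_I_mul_int (n : ℤ) : cexp (Real.pi * I * n) = (-1) ^ n := by
  rw [mul_comm, exp_int_mul, exp_pi_mul_I]

lemma exp_pi_mul_I_mul_int_sq (n : ℤ) : cexp (Real.pi * I * n ^ 2) = (-1) ^ n := by
  have h := exp_pi_mul_I_mul_int (n ^ 2)
  push_cast at h
  rw [h]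
  rcases n.even_or_odd with hn | hn
  · rw [hn.neg_one_zpow, (hn.pow_of_ne_zero two_ne_zero).neg_one_zpow]
  · rw [hn.neg_one_zpow, hn.pow.neg_one_zpow]

lemma theta01_eq_jacobiTheta₂ (z : ℂ) : theta01 z = jacobiTheta₂ (1 / 2) z := by
  refine tsum_congr fun n ↦ ?_
  rw [jacobiTheta₂_term, ← exp_pi_mul_I_mul_int, ← exp_add]
  ring_nf

lemma theta10_eq_exp_mul_jacobiTheta₂ (z : ℂ) :
    theta10 z = cexp (Real.pi * I * z / 4) * jacobiTheta₂ (z / 2) z := by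
  rw [theta10, jacobiTheta₂, ← tsum_mul_left]
  refine tsum_congr fun n ↦ ?_
  rw [jacobiTheta₂_term, ← exp_add]
  ring_nf

lemma differentiableAt_theta00 {z : ℂ} (hz : 0 < z.im) : DifferentiableAt ℂ theta00 z := by
  rw [funext theta00_eq_jacobiTheta₂]
  exact differentiableAt_jacobiTheta₂_snd 0 hz

lemma differentiableAt_theta01 {z : ℂ} (hz : 0 < z.im) : DifferentiableAt ℂ theta01 z := by
  rw [funext theta01_eq_jacobiTheta₂]
  exact differentiableAt_jacobiTheta₂_snd (1 / 2) hz

lemma differentiableAt_theta10 {z : ℂ} (hz : 0 < z.im) : DifferentiableAt ℂ theta10 z := by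
  rw [funext theta10_eq_exp_mul_jacobiTheta₂]
  have hθ : DifferentiableAt ℂ (fun w : ℂ ↦ jacobiTheta₂ (w / 2) w) z :=
    (hasFDerivAt_jacobiTheta₂ (z / 2) hz).differentiableAt.comp z
      (f := fun w : ℂ ↦ (w / 2, w)) (by fun_prop)
  fun_prop

lemma theta00_add_one (z : ℂ) : theta00 (z + 1) = theta01 z := by
  refine tsum_congr fun n ↦ ?_
  rw [← exp_pi_mul_I_mul_int_sq, ← exp_add]
  ring_nf

lemma theta01_add_one (z : ℂ) : theta01 (z + 1) = theta00 z := by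
  refine tsum_congr fun n ↦ ?_
  rw [mul_add, mul_one, exp_add, exp_pi_mul_I_mul_int_sq, mul_left_comm, ← mul_zpow]
  norm_num

lemma theta10_add_one (z : ℂ) : theta10 (z + 1) = cexp (Real.pi * I / 4) * theta10 z := by
  rw [theta10, theta10, ← tsum_mul_left]
  refine tsum_congr fun n ↦ ?_
  have h_even : cexp (Real.pi * I * n ^ 2 + Real.pi * I * n) = 1 := by
    rw [exp_add, exp_pi_mul_I_mul_int_sq, exp_pi_mul_I_mul_int, ← mul_zpow]
    norm_num
  calc cexp (Real.pi * I * (n + 1 / 2) ^ 2 * (z + 1))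
      = cexp (Real.pi * I / 4) * cexp (Real.pi * I * (n + 1 / 2) ^ 2 * z) *
          cexp (Real.pi * I * n ^ 2 + Real.pi * I * n) := by
        rw [← exp_add, ← exp_add]
        ring_nf
    _ = cexp (Real.pi * I / 4) * cexp (Real.pi * I * (n + 1 / 2) ^ 2 * z) := by
        rw [h_even, mul_one]

lemma neg_I_mul_cpow_half_ne_zero {z : ℂ} (hz : z ≠ 0) : (-I * z) ^ (1 / 2 : ℂ) ≠ 0 := by
  simp [cpow_eq_zero_iff, hz]

lemma neg_I_mul_cpow_half_pow_four (z : ℂ) : ((-I * z) ^ (1 / 2 : ℂ)) ^ 4 = -z ^ 2 := by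
  have h_sq : ((-I * z) ^ (1 / 2 : ℂ)) ^ 2 = -I * z := by
    rw [one_div]; exact cpow_ofNat_inv_pow _ 2
  rw [pow_mul _ 2 2, h_sq, mul_pow, neg_sq, I_sq, neg_one_mul]

lemma theta00_neg_one_div {z : ℂ} (hz : z ≠ 0) :
    theta00 (-1 / z) = (-I * z) ^ (1 / 2 : ℂ) * theta00 z := by
  have h_ne := neg_I_mul_cpow_half_ne_zero hz
  rw [theta00_eq_jacobiTheta₂, theta00_eq_jacobiTheta₂ z, jacobiTheta₂_functional_equation 0 z,
    zero_pow two_ne_zero, mul_zero, zero_div, exp_zero, mul_one, ← mul_assoc,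
    mul_one_div_cancel h_ne, one_mul]

lemma theta10_neg_one_div {z : ℂ} (hz : z ≠ 0) :
    theta10 (-1 / z) = (-I * z) ^ (1 / 2 : ℂ) * theta01 z := by
  have h_ne := neg_I_mul_cpow_half_ne_zero hz
  have h_exp : Real.pi * I * (-1 / z) / 4 = -Real.pi * I * (1 / 2) ^ 2 / z := by ring
  have h_arg : -1 / z / 2 = -(1 / 2 / z) := by ring
  rw [theta10_eq_exp_mul_jacobiTheta₂, theta01_eq_jacobiTheta₂,
    jacobiTheta₂_functional_equation (1 / 2) z, h_arg, jacobiTheta₂_neg_left, h_exp,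
    ← mul_assoc, ← mul_assoc, mul_one_div_cancel h_ne, one_mul]

lemma theta01_neg_one_div {z : ℂ} (hz : z ≠ 0) :
    theta01 (-1 / z) = (-I * z) ^ (1 / 2 : ℂ) * theta10 z := by
  have h_ne := neg_I_mul_cpow_half_ne_zero hz
  have h_exp : -Real.pi * I * (z / 2) ^ 2 / z = -(Real.pi * I * z / 4) := by
    field_simp
    norm_num
  have h_arg : z / 2 / z = 1 / 2 := by field_simp
  rw [theta10_eq_exp_mul_jacobiTheta₂, theta01_eq_jacobiTheta₂,
    jacobiTheta₂_functional_equation (z / 2) z, h_arg, h_exp, exp_neg]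
  field_simp [h_ne, exp_ne_zero]

end ThetaConstants

section Slash

variable {k : ℤ} (f : ℍ → ℂ) (z : ℍ)

lemma coe_T_smul : ((T • z : ℍ) : ℂ) = z + 1 := by
  simpa using coe_T_zpow_smul_eq (z := z) (n := 1)

lemma slash_T_apply : (f ∣[k] T) z = f (T • z) := by
  simp [ModularForm.SL_slash_apply, ModularGroup.denom_apply, coe_T]

lemma vecMul_map_S {R : Type*} [CommRing R] (v : Fin 2 → R) :
    v ᵥ* S.1.map (Int.cast : ℤ → R) = ![v 1, -v 0] := by
  ext i
  fin_cases i <;> simp [vecMul, dotProduct, coe_S]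

lemma vecMul_map_T {R : Type*} [CommRing R] (v : Fin 2 → R) :
    v ᵥ* T.1.map (Int.cast : ℤ → R) = ![v 0, v 0 + v 1] := by
  ext i
  fin_cases i <;> simp [vecMul, dotProduct, coe_T]

lemma slash_eq_vecMul_of_generators {R : Type*} [CommRing R] {F : (Fin 2 → R) → ℍ → ℂ}
    (hS : ∀ v, F v ∣[k] S = F ![v 1, -v 0]) (hT : ∀ v, F v ∣[k] T = F ![v 0, v 0 + v 1])
    (γ : SL(2, ℤ)) (v : Fin 2 → R) :
    F v ∣[k] γ = F (v ᵥ* γ.1.map (Int.cast : ℤ → R)) := by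
  have hγ : γ ∈ Subgroup.closure {S, T} := by simp [SpecialLinearGroup.SL2Z_generators]
  induction hγ using Subgroup.closure_induction generalizing v with
  | mem γ hγ =>
    obtain rfl | rfl := hγ
    · rw [hS, vecMul_map_S]
    · rw [hT, vecMul_map_T]
  | one => simp
  | mul γ δ _ _ ihγ ihδ =>
    rw [SlashAction.slash_mul, ihγ, ihδ, vecMul_vecMul, Matrix.SpecialLinearGroup.coe_mul,
      map_mul_intCast]
  | inv γ _ ih =>
    have h_cancel := ih (v ᵥ* (γ⁻¹).1.map (Int.cast : ℤ → R))
    rw [vecMul_vecMul, ← map_mul_intCast, ← Matrix.SpecialLinearGroup.coe_mul, inv_mul_cancel,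
      Matrix.SpecialLinearGroup.coe_one, Matrix.map_one _ Int.cast_zero Int.cast_one,
      vecMul_one] at h_cancel
    rw [← h_cancel, ← SlashAction.slash_mul, mul_inv_cancel, SlashAction.slash_one]

end Slash

section ThetaFourthPowers

/-- The form `θ10⁴` on the upper half-plane. -/
noncomputable def H₂ (z : ℍ) : ℂ := theta10 z ^ 4

/-- The form `θ00⁴` on the upper half-plane. -/
noncomputable def H₃ (z : ℍ) : ℂ := theta00 z ^ 4

/-- The form `θ01⁴` on the upper half-plane. -/
noncomputable def H₄ (z : ℍ) : ℂ := theta01 z ^ 4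

lemma pow_four_slash_S {f g : ℂ → ℂ}
    (h : ∀ z, z ≠ 0 → f (-1 / z) = (-I * z) ^ (1 / 2 : ℂ) * g z) :
    (fun z : ℍ ↦ f z ^ 4) ∣[(2 : ℤ)] S = -fun z : ℍ ↦ g z ^ 4 := by
  ext z
  have h_S : (-z : ℂ)⁻¹ = -1 / z := by rw [inv_neg, neg_div, one_div]
  rw [SlashInvariantForm.slash_S_apply, UpperHalfPlane.coe_mk, h_S, h z z.ne_zero, mul_pow,
    neg_I_mul_cpow_half_pow_four, Pi.neg_apply]
  field_simp [z.ne_zero]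

lemma H₂_slash_S : H₂ ∣[(2 : ℤ)] S = -H₄ := pow_four_slash_S fun _ ↦ theta10_neg_one_div

lemma H₃_slash_S : H₃ ∣[(2 : ℤ)] S = -H₃ := pow_four_slash_S fun _ ↦ theta00_neg_one_div

lemma H₄_slash_S : H₄ ∣[(2 : ℤ)] S = -H₂ := pow_four_slash_S fun _ ↦ theta01_neg_one_div

lemma H₂_slash_T : H₂ ∣[(2 : ℤ)] T = -H₂ := by
  have h_exp : cexp (Real.pi * I / 4) ^ 4 = -1 := by
    rw [← exp_nat_mul, ← exp_pi_mul_I]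
    ring_nf
  ext z
  rw [slash_T_apply, H₂, coe_T_smul, theta10_add_one, mul_pow, h_exp, neg_one_mul,
    Pi.neg_apply, H₂]

lemma H₃_slash_T : H₃ ∣[(2 : ℤ)] T = H₄ := by
  ext z
  rw [slash_T_apply, H₃, coe_T_smul, theta00_add_one, H₄]

lemma H₄_slash_T : H₄ ∣[(2 : ℤ)] T = H₃ := by
  ext z
  rw [slash_T_apply, H₄, coe_T_smul, theta01_add_one, H₃]

end ThetaFourthPowers

section Nonvanishing

lemma tendsto_theta00_atImInfty : Tendsto theta00 (comap im atTop) (𝓝 1) := by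
  have h_exp : Tendsto (fun z : ℂ ↦ Real.exp (-Real.pi * z.im)) (comap im atTop) (𝓝 0) :=
    Real.tendsto_exp_atBot.comp <|
      (tendsto_id.const_mul_atTop_of_neg (neg_lt_zero.2 Real.pi_pos)).comp tendsto_comap
  have h_sub := isBigO_at_im_infty_jacobiTheta_sub_one.trans_tendsto h_exp
  exact tendsto_sub_nhds_zero_iff.1 h_sub

lemma tendsto_theta01_atImInfty : Tendsto theta01 (comap im atTop) (𝓝 1) := by
  have h_shift : Tendsto (· + 1 : ℂ → ℂ) (comap im atTop) (comap im atTop) :=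
    tendsto_comap_iff.2 (tendsto_comap.congr fun z ↦ by simp)
  exact (tendsto_theta00_atImInfty.comp h_shift).congr theta00_add_one

lemma norm_exp_pi_mul_I_mul_sq_mul (x : ℝ) (z : ℂ) :
    ‖cexp (Real.pi * I * (x : ℂ) ^ 2 * z)‖ = Real.exp (-Real.pi * x ^ 2 * z.im) := by
  rw [norm_exp]
  congr 1
  rw [show Real.pi * I * (x : ℂ) ^ 2 * z = ((Real.pi * x ^ 2 : ℝ) : ℂ) * (I * z) by
    push_cast; ring, re_ofReal_mul, I_mul_re]
  ring

open HurwitzKernelBounds in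
lemma tendsto_theta10_atImInfty : Tendsto theta10 (comap im atTop) (𝓝 0) := by
  have h_half : ((1 / 2 : ℝ) : UnitAddCircle) ≠ 0 := by
    rw [Ne, AddCircle.coe_eq_zero_iff_of_mem_Ico (by norm_num)]
    norm_num
  obtain ⟨p, hp, hO⟩ := isBigO_atTop_F_int_zero_sub ((1 / 2 : ℝ) : UnitAddCircle)
  simp only [if_neg h_half, sub_zero] at hO
  have h_exp : Tendsto (fun t : ℝ ↦ Real.exp (-p * t)) atTop (𝓝 0) :=
    Real.tendsto_exp_atBot.comp (tendsto_id.const_mul_atTop_of_neg (neg_lt_zero.2 hp))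
  refine squeeze_zero_norm' ?_ ((hO.trans_tendsto h_exp).comp tendsto_comap)
  filter_upwards [tendsto_comap.eventually (eventually_gt_atTop 0)] with z hz
  have h_norm (n : ℤ) : ‖cexp (Real.pi * I * ((n : ℂ) + 1 / 2) ^ 2 * z)‖ =
      f_int 0 (1 / 2) z.im n := by
    simpa [f_int] using norm_exp_pi_mul_I_mul_sq_mul (n + 1 / 2) z
  calc ‖theta10 z‖ ≤ ∑' n, f_int 0 (1 / 2) z.im n :=
        tsum_of_norm_bounded (summable_f_int 0 (1 / 2) hz).hasSum fun n ↦ (h_norm n).le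
    _ = F_int 0 ((1 / 2 : ℝ) : UnitAddCircle) z.im := rfl

lemma tsum_exp_neg_pi_mul_sq_pos (a : ℝ) {t : ℝ} (ht : 0 < t) :
    0 < ∑' n : ℤ, Real.exp (-Real.pi * (n + a) ^ 2 * t) := by
  have h_summable : Summable fun n : ℤ ↦ Real.exp (-Real.pi * (n + a) ^ 2 * t) := by
    refine (HurwitzKernelBounds.summable_f_int 0 a ht).congr fun n ↦ ?_
    rw [HurwitzKernelBounds.f_int, pow_zero, one_mul]
  exact h_summable.tsum_pos (fun n ↦ (Real.exp_pos _).le) 0 (Real.exp_pos _)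

lemma tsum_exp_mul_ofReal_mul_I_ne_zero (a : ℝ) {t : ℝ} (ht : 0 < t) :
    ∑' n : ℤ, cexp (Real.pi * I * ((n : ℂ) + a) ^ 2 * (t * I)) ≠ 0 := by
  have h_real (n : ℤ) : cexp (Real.pi * I * ((n : ℂ) + a) ^ 2 * (t * I)) =
      (Real.exp (-Real.pi * (n + a) ^ 2 * t) : ℝ) := by
    push_cast
    congr 1
    linear_combination Real.pi * ((n : ℂ) + a) ^ 2 * t * I_mul_I
  rw [tsum_congr h_real, ← ofReal_tsum, ofReal_ne_zero]
  exact (tsum_exp_neg_pi_mul_sq_pos a ht).ne'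

lemma theta00_I_ne_zero : theta00 I ≠ 0 := by
  simpa [theta00] using tsum_exp_mul_ofReal_mul_I_ne_zero 0 one_pos

lemma theta10_I_ne_zero : theta10 I ≠ 0 := by
  simpa [theta10] using tsum_exp_mul_ofReal_mul_I_ne_zero (1 / 2) one_pos

lemma theta01_I_ne_zero : theta01 I ≠ 0 := by
  have h_fixed : theta01 I = theta10 I := by simpa using theta01_neg_one_div I_ne_zero
  exact h_fixed ▸ theta10_I_ne_zero

/-- The form `θ10⁴ θ00⁴ θ01⁴` of weight six. -/
noncomputable def thetaProduct : ℍ → ℂ := H₂ * H₃ * H₄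

lemma thetaProduct_slash_S : thetaProduct ∣[(6 : ℤ)] S = -thetaProduct := by
  have h := ModularForm.mul_slash_SL2 (2 + 2) 2 S (H₂ * H₃) H₄
  rw [ModularForm.mul_slash_SL2 2 2, H₂_slash_S, H₃_slash_S, H₄_slash_S] at h
  rw [thetaProduct]
  exact h.trans (by ring)

lemma thetaProduct_slash_T : thetaProduct ∣[(6 : ℤ)] T = -thetaProduct := by
  have h := ModularForm.mul_slash_SL2 (2 + 2) 2 T (H₂ * H₃) H₄
  rw [ModularForm.mul_slash_SL2 2 2, H₂_slash_T, H₃_slash_T, H₄_slash_T] at h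
  rw [thetaProduct]
  exact h.trans (by ring)

lemma thetaProduct_sq_slash_eq_self (γ : SL(2, ℤ)) :
    (thetaProduct ^ 2) ∣[(12 : ℤ)] γ = thetaProduct ^ 2 := by
  rw [sq]
  refine SlashInvariantForm.slash_action_generators_SL2Z ?_ ?_ γ
  · have h := ModularForm.mul_slash_SL2 6 6 S thetaProduct thetaProduct
    rwa [thetaProduct_slash_S, neg_mul_neg] at h
  · have h := ModularForm.mul_slash_SL2 6 6 T thetaProduct thetaProduct
    rwa [thetaProduct_slash_T, neg_mul_neg] at h

lemma mdifferentiable_comp_coe {f : ℂ → ℂ} (hf : ∀ z : ℂ, 0 < z.im → DifferentiableAt ℂ f z) :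
    MDiff fun z : ℍ ↦ f z := fun z ↦
  (hf z z.im_pos).mdifferentiableAt.comp z z.mdifferentiable_coe

lemma mdifferentiable_thetaProduct_sq : MDiff (thetaProduct ^ 2) :=
  mdifferentiable_comp_coe (f := fun z ↦ (theta10 z ^ 4 * theta00 z ^ 4 * theta01 z ^ 4) ^ 2)
    fun _ hz ↦ ((((differentiableAt_theta10 hz).pow 4).mul
      ((differentiableAt_theta00 hz).pow 4)).mul ((differentiableAt_theta01 hz).pow 4)).pow 2

lemma isZeroAtImInfty_thetaProduct_sq : IsZeroAtImInfty (thetaProduct ^ 2) := by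
  have h_lim : Tendsto (fun z ↦ (theta10 z ^ 4 * theta00 z ^ 4 * theta01 z ^ 4) ^ 2)
      (comap im atTop) (𝓝 ((0 ^ 4 * 1 ^ 4 * 1 ^ 4) ^ 2)) :=
    (((tendsto_theta10_atImInfty.pow 4).mul (tendsto_theta00_atImInfty.pow 4)).mul
      (tendsto_theta01_atImInfty.pow 4)).pow 2
  rw [IsZeroAtImInfty, ZeroAtFilter]
  refine (h_lim.comp tendsto_coe_atImInfty).trans_eq ?_
  norm_num

/-- The eighth power of the product of the theta constants, as a level one cusp form. -/
noncomputable def thetaProductCuspForm : CuspForm 𝒮ℒ 12 where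
  toFun := thetaProduct ^ 2
  slash_action_eq' γ hγ := by
    obtain ⟨γ, rfl⟩ := hγ
    exact thetaProduct_sq_slash_eq_self γ
  holo' := mdifferentiable_thetaProduct_sq
  zero_at_cusps' hc := by
    rw [Subgroup.IsArithmetic.isCusp_iff_isCusp_SL2Z] at hc
    rw [OnePoint.isZeroAt_iff_forall_SL2Z hc]
    intro γ _
    rw [thetaProduct_sq_slash_eq_self]
    exact isZeroAtImInfty_thetaProduct_sq

lemma thetaProductCuspForm_apply (z : ℍ) :
    thetaProductCuspForm z = (theta10 z ^ 4 * theta00 z ^ 4 * theta01 z ^ 4) ^ 2 := rfl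

lemma thetaProductCuspForm_ne_zero (z : ℍ) : thetaProductCuspForm z ≠ 0 := by
  obtain ⟨c, hc⟩ := CuspForm.exists_smul_discriminant_of_weight_eq_twelve thetaProductCuspForm
  have h_apply (w : ℍ) : c * ModularForm.discriminant w = thetaProductCuspForm w :=
    DFunLike.congr_fun hc w
  have h_I : thetaProductCuspForm UpperHalfPlane.I ≠ 0 := by
    simp [thetaProductCuspForm_apply, theta00_I_ne_zero, theta01_I_ne_zero, theta10_I_ne_zero]
  rw [← h_apply] at h_I ⊢
  exact mul_ne_zero (left_ne_zero_of_mul h_I) (ModularForm.discriminant_ne_zero z)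

lemma theta10_ne_zero {z : ℂ} (hz : 0 < z.im) : theta10 z ≠ 0 := fun h_zero ↦
  thetaProductCuspForm_ne_zero ⟨z, hz⟩ (by simp [thetaProductCuspForm_apply, h_zero])

lemma differentiableAt_hFn {z : ℂ} (hz : 0 < z.im) : DifferentiableAt ℂ hFn z :=
  ((((differentiableAt_theta00 hz).pow 4).add ((differentiableAt_theta01 hz).pow 4)).const_mul
    128).div ((differentiableAt_theta10 hz).pow 8) (pow_ne_zero 8 (theta10_ne_zero hz))

end Nonvanishing

section Conjugates

/-- The weight `-2` expression `128 (f + g) / w²` in weight two forms, so that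
`h = thetaQuotient θ00⁴ θ01⁴ θ10⁴`. -/
noncomputable def thetaQuotient (f g w : ℍ → ℂ) : ℍ → ℂ := (128 : ℂ) • ((f + g) / (w * w))

lemma thetaQuotient_slash (f g w : ℍ → ℂ) (γ : SL(2, ℤ)) :
    thetaQuotient f g w ∣[(-2 : ℤ)] γ =
      thetaQuotient (f ∣[(2 : ℤ)] γ) (g ∣[(2 : ℤ)] γ) (w ∣[(2 : ℤ)] γ) := by
  have h_div := ModularForm.div_slash_SL2 2 (2 + 2) γ (f + g) (w * w)
  rw [SlashAction.add_slash, ModularForm.mul_slash_SL2 2 2] at h_div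
  rw [thetaQuotient, thetaQuotient, ModularForm.SL_smul_slash]
  exact congrArg ((128 : ℂ) • ·) h_div

lemma thetaQuotient_comm (f g w : ℍ → ℂ) : thetaQuotient f g w = thetaQuotient g f w := by
  rw [thetaQuotient, thetaQuotient, add_comm]

lemma thetaQuotient_neg_right (f g w : ℍ → ℂ) :
    thetaQuotient f g (-w) = thetaQuotient f g w := by
  rw [thetaQuotient, thetaQuotient, neg_mul_neg]

/-- The `SL(2, ℤ)`-conjugates of `h`, indexed by the bottom row of the conjugating matrix modulo
two; the value at the row `(0, 0)`, which does not occur, is zero. -/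
noncomputable def hConj (v : Fin 2 → ZMod 2) : ℍ → ℂ :=
  match v 0, v 1 with
  | 0, 0 => 0
  | 0, 1 => thetaQuotient H₃ H₄ H₂
  | 1, 0 => thetaQuotient (-H₃) (-H₂) H₄
  | 1, 1 => thetaQuotient (-H₄) H₂ H₃

lemma hConj_slash_S (v : Fin 2 → ZMod 2) : hConj v ∣[(-2 : ℤ)] S = hConj ![v 1, -v 0] := by
  generalize h0 : v 0 = a
  generalize h1 : v 1 = b
  fin_cases a <;> fin_cases b <;>
    simp only [hConj, h0, h1, thetaQuotient_slash, SlashAction.zero_slash, SlashAction.neg_slash,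
      H₂_slash_S, H₃_slash_S, H₄_slash_S, thetaQuotient_neg_right, neg_neg]
  · rfl
  · rfl
  · rfl
  · exact thetaQuotient_comm _ _ _

lemma hConj_slash_T (v : Fin 2 → ZMod 2) : hConj v ∣[(-2 : ℤ)] T = hConj ![v 0, v 0 + v 1] := by
  generalize h0 : v 0 = a
  generalize h1 : v 1 = b
  fin_cases a <;> fin_cases b <;>
    simp only [hConj, h0, h1, thetaQuotient_slash, SlashAction.zero_slash, SlashAction.neg_slash,
      H₂_slash_T, H₃_slash_T, H₄_slash_T, thetaQuotient_neg_right, neg_neg]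
  · rfl
  · exact thetaQuotient_comm _ _ _
  · rfl
  · rfl

lemma hConj_zero_one : hConj ![0, 1] = fun z : ℍ ↦ hFn z := by
  ext z
  change 128 * ((theta00 z ^ 4 + theta01 z ^ 4) / (theta10 z ^ 4 * theta10 z ^ 4)) = hFn z
  rw [hFn, ← pow_add, mul_div_assoc]

lemma vecMul_map_of_mem_Gamma0_two {γ : SL(2, ℤ)} (hγ : γ ∈ CongruenceSubgroup.Gamma0 2) :
    ![0, 1] ᵥ* γ.1.map (Int.cast : ℤ → ZMod 2) = ![0, 1] := by
  have h_c : (γ.1 1 0 : ZMod 2) = 0 := CongruenceSubgroup.Gamma0_mem.1 hγ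
  have h_det : (γ.1 0 0 : ZMod 2) * γ.1 1 1 = 1 := by
    have h := congrArg (Int.cast : ℤ → ZMod 2) γ.det_coe
    rw [det_fin_two] at h
    push_cast at h
    rwa [h_c, mul_zero, sub_zero] at h
  have h_d : (γ.1 1 1 : ZMod 2) = 1 := by
    generalize (γ.1 0 0 : ZMod 2) = a at h_det
    generalize (γ.1 1 1 : ZMod 2) = d at h_det
    decide +revert
  ext i
  fin_cases i <;> simp [vecMul, dotProduct, h_c, h_d]

lemma hFn_slash_of_mem_Gamma0_two {γ : SL(2, ℤ)} (hγ : γ ∈ CongruenceSubgroup.Gamma0 2) :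
    (fun z : ℍ ↦ hFn z) ∣[(-2 : ℤ)] γ = fun z : ℍ ↦ hFn z := by
  rw [← hConj_zero_one, slash_eq_vecMul_of_generators hConj_slash_S hConj_slash_T,
    vecMul_map_of_mem_Gamma0_two hγ]

end Conjugates

/-- `h = 128(θ00⁴ + θ01⁴)/θ10⁸` is holomorphic on the upper half-plane and is modular of
weight `−2` for `Γ₀(2)`: for every `(a b; c d) ∈ SL₂(ℤ)` with `c ≡ 0 (mod 2)`,
`h((az+b)/(cz+d)) = (cz+d)^{−2} h(z)`. -/
theorem hFn_modular_weight_neg_two :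
    DifferentiableOn ℂ hFn {z : ℂ | 0 < z.im} ∧
    ∀ M : Matrix (Fin 2) (Fin 2) ℤ, M.det = 1 → (2 : ℤ) ∣ M 1 0 →
      ∀ z : ℂ, 0 < z.im →
        hFn (((M 0 0 : ℂ) * z + (M 0 1 : ℂ)) / ((M 1 0 : ℂ) * z + (M 1 1 : ℂ))) =
          ((M 1 0 : ℂ) * z + (M 1 1 : ℂ)) ^ (-2 : ℤ) * hFn z := by
  refine ⟨fun z hz ↦ (differentiableAt_hFn hz).differentiableWithinAt, fun M hM hc z hz ↦ ?_⟩
  let γ : SL(2, ℤ) := ⟨M, hM⟩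
  have hγ : γ ∈ CongruenceSubgroup.Gamma0 2 :=
    CongruenceSubgroup.Gamma0_mem.2 ((ZMod.intCast_zmod_eq_zero_iff_dvd _ 2).2 hc)
  have h := (ModularForm.slash_action_eq'_iff (-2) _ γ ⟨z, hz⟩).1
    (congrFun (hFn_slash_of_mem_Gamma0_two hγ) ⟨z, hz⟩)
  rwa [UpperHalfPlane.coe_specialLinearGroup_apply] at h
end
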